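/- arXiv:1008.0144 — 2 statements merged into one kernel-verified Lean document; each statement's English description precedes it below -/
import Mathlib

section
/- Let ν > −1, N ≥ 1, and let 0 < a₁ < a₂ < ⋯ < a_N be distinct positive reals. For 0 ≤ i ≤ N−1 define P^{(i)}(y) = ∫₀^∞ (1/2) (u/y)^{ν/2} J_ν(√(uy)) e^{(y−u)/2} ∏_{ℓ=1}^{i} (−u − a_ℓ) du, and for 0 ≤ k ≤ N−1 define Q^{(k)}(y) = Σ_{ℓ=1}^{k+1} [ (1/2) (y/a_ℓ)^{ν/2} e^{−(a_ℓ+y)/2} I_ν(√(a_ℓ y)) / ∏_{1≤j≤k+1, j≠ℓ} (a_ℓ − a_j) ], for y > 0. Then the biorthonormality relation ∫₀^∞ P^{(i)}(y) Q^{(k)}(y) dy = δ_{ik} holds for all 0 ≤ i, k ≤ N−1. -/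
open MeasureTheory Real

/-- The Bessel function of the first kind `J_ν(z)`. -/
noncomputable def besselJ (ν z : ℝ) : ℝ :=
  ∑' n : ℕ, ((-1 : ℝ) ^ n / (Real.Gamma ((n : ℝ) + 1) * Real.Gamma ((n : ℝ) + 1 + ν))) *
    (z / 2) ^ (2 * (n : ℝ) + ν)

/-- The modified Bessel function of the first kind `I_ν(z)`. -/
noncomputable def besselI (ν z : ℝ) : ℝ :=
  ∑' n : ℕ, ((1 : ℝ) / (Real.Gamma ((n : ℝ) + 1) * Real.Gamma ((n : ℝ) + 1 + ν))) *
    (z / 2) ^ (2 * (n : ℝ) + ν)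

/-- Type-II multiple orthogonal polynomial `P^{(i)}` built from the first `i`
points of the configuration `a`, in its real integral representation. -/
noncomputable def typeIIP (ν : ℝ) {N : ℕ} (a : Fin N → ℝ) (i : Fin N) (y : ℝ) : ℝ :=
  ∫ u in Set.Ioi (0 : ℝ),
    (1 / 2) * (u / y) ^ (ν / 2) * besselJ ν (Real.sqrt (u * y)) * Real.exp ((y - u) / 2) *
      ∏ ℓ ∈ Finset.Iio i, (-u - a ℓ)

/-- Type-I multiple orthogonal function `Q^{(k)}` built from the first `k+1`
points of the configuration `a`, in its residue-sum representation. -/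
noncomputable def typeIQ (ν : ℝ) {N : ℕ} (a : Fin N → ℝ) (k : Fin N) (y : ℝ) : ℝ :=
  ∑ ℓ ∈ Finset.Iic k,
    (1 / 2) * (y / a ℓ) ^ (ν / 2) * Real.exp (-(a ℓ + y) / 2) *
      besselI ν (Real.sqrt (a ℓ * y)) / ∏ j ∈ (Finset.Iic k).erase ℓ, (a ℓ - a j)

/-!
Let `T_t = exp (t (X D² + (ν + 1) D))` be the squared Bessel semigroup acting on
polynomials. Expanding the Bessel function turns the kernel of `Q^{(k)}` into a Poisson mixture of
gamma densities, whose moments show that integrating a polynomial `p` against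
`(1/2) (y/a)^{ν/2} e^{-(a+y)/2} I_ν(√(ay))` gives `(T_2 p)(a)`. Replacing `a` by `-a` in that
computation turns `I_ν` into `J_ν`, and reflecting the variable reverses time, so that `P^{(i)}` is
the polynomial `T_{-2} (∏_{ℓ ≤ i} (X - a_ℓ))`. Pairing `P^{(i)}` with `Q^{(k)}` thus leaves
`∑_ℓ ∏_{j ≤ i} (a_ℓ - a_j) / ∏_{j ≠ ℓ} (a_ℓ - a_j)`, a divided difference of order `k` of a monic
polynomial of degree `i` that vanishes at `a_1, …, a_i`.
-/

section
open Polynomial Finset ProbabilityTheory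

/-! ### Pochhammer sums -/

theorem ascPochhammer_eval_add {R : Type*} [CommRing R] (r s : R) (m : ℕ) :
    (ascPochhammer R m).eval (r + s) =
      ∑ ij ∈ antidiagonal m, (m.choose ij.1 : R) *
        ((descPochhammer R ij.1).eval r * (ascPochhammer R ij.2).eval (s + ij.1)) := by
  have smeval_eq (k : ℕ) (x : R) :
      (descPochhammer ℤ k).smeval x = (descPochhammer R k).eval x := by
    rw [descPochhammer_smeval_eq_ascPochhammer, ascPochhammer_smeval_eq_eval,
      descPochhammer_eval_eq_ascPochhammer]
  have vandermonde := Ring.descPochhammer_smeval_add m (Commute.all r (s + m - 1))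
  simp only [smeval_eq] at vandermonde
  rw [descPochhammer_eval_eq_ascPochhammer] at vandermonde
  convert! vandermonde using 1
  · congr 1; ring
  · refine sum_congr rfl fun ij hij => ?_
    rw [descPochhammer_eval_eq_ascPochhammer (R := R) (s + m - 1), ← mem_antidiagonal.1 hij]
    push_cast
    congr 3; ring

theorem ascPochhammer_eval_add_right {R : Type*} [CommSemiring R] (s : R) (m n : ℕ) :
    (ascPochhammer R (m + n)).eval s =
      (ascPochhammer R m).eval s * (ascPochhammer R n).eval (s + m) := by
  simp [← ascPochhammer_mul]

theorem Gamma_add_natCast_eq {s : ℝ} (hs : 0 < s) (m : ℕ) :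
    Gamma (s + m) = (ascPochhammer ℝ m).eval s * Gamma s := by
  induction m with
  | zero => simp
  | succ m ih =>
    have hsm : s + m ≠ 0 := by positivity
    rw [Nat.cast_succ, ← add_assoc, Gamma_add_one hsm, ih, ascPochhammer_succ_eval]
    ring

theorem hasSum_pow_div_factorial_mul_descFactorial (x : ℝ) (i : ℕ) :
    HasSum (fun n : ℕ => x ^ n / n.factorial * n.descFactorial i) (exp x * x ^ i) := by
  have shift : ∀ n, n ∉ Set.range (· + i) → x ^ n / n.factorial * n.descFactorial i = 0 := by
    intro n hn
    have : n < i := by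
      by_contra! h
      exact hn ⟨n - i, Nat.sub_add_cancel h⟩
    simp [Nat.descFactorial_of_lt this]
  rw [← (add_left_injective i).hasSum_iff shift]
  have hexp := (NormedSpace.expSeries_div_hasSum_exp x).mul_right (x ^ i)
  rw [← exp_eq_exp_ℝ] at hexp
  refine hexp.congr_fun fun n => ?_
  have hfac := Nat.factorial_mul_descFactorial (Nat.le_add_left i n)
  rw [Nat.add_sub_cancel] at hfac
  have hdesc : ((n + i).descFactorial i : ℝ) ≠ 0 := by
    exact_mod_cast (Nat.descFactorial_pos.2 (Nat.le_add_left i n)).ne'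
  simp only [Function.comp_apply, ← hfac, Nat.cast_mul, pow_add]
  field_simp

theorem hasSum_pow_div_factorial_mul_ascPochhammer (x s : ℝ) (m : ℕ) :
    HasSum (fun n : ℕ => x ^ n / n.factorial * (ascPochhammer ℝ m).eval (n + s))
      (exp x * ∑ ij ∈ antidiagonal m,
        (m.choose ij.1 : ℝ) * (ascPochhammer ℝ ij.2).eval (s + ij.1) * x ^ ij.1) := by
  rw [mul_sum]
  have termwise := hasSum_sum fun (ij : ℕ × ℕ) (_ : ij ∈ antidiagonal m) =>
    (hasSum_pow_div_factorial_mul_descFactorial x ij.1).mul_left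
      ((m.choose ij.1 : ℝ) * (ascPochhammer ℝ ij.2).eval (s + ij.1))
  convert! termwise using 1
  · ext n
    rw [ascPochhammer_eval_add, mul_sum]
    refine sum_congr rfl fun ij _ => ?_
    rw [descPochhammer_eval_eq_descFactorial]
    ring
  · exact sum_congr rfl fun ij _ => by ring

/-! ### The squared Bessel semigroup on polynomials -/

theorem sum_antidiagonal_antidiagonal_fst {A M : Type*} [AddMonoid A] [HasAntidiagonal A]
    [AddCommMonoid M] (f : A → A → A → M) (m : A) :
    ∑ ij ∈ antidiagonal m, ∑ kl ∈ antidiagonal ij.1, f kl.1 kl.2 ij.2 =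
      ∑ kr ∈ antidiagonal m, ∑ lj ∈ antidiagonal kr.2, f kr.1 lj.1 lj.2 := by
  rw [sum_sigma', sum_sigma']
  refine sum_nbij' (fun x => ⟨(x.2.1, x.2.2 + x.1.2), (x.2.2, x.1.2)⟩)
    (fun x => ⟨(x.1.1 + x.2.1, x.2.2), (x.1.1, x.2.1)⟩) ?_ ?_ ?_ ?_ ?_ <;>
    simp only [mem_sigma, HasAntidiagonal.mem_antidiagonal] <;> grind

theorem choose_add_mul_choose (k l j : ℕ) :
    (k + l + j).choose (k + l) * (k + l).choose k =
      (k + l + j).choose k * (l + j).choose l := by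
  simpa [add_assoc] using Nat.choose_mul (n := k + l + j) (Nat.le_add_right k l)

section
variable {R : Type*} [CommSemiring R]

/-- The operator `exp (t (X D² + s D))` on polynomials, where `X D² + s D` is half the generator of
the squared Bessel process of dimension `2 s`. As it maps `X ^ m` to `m (s + m - 1) X ^ (m - 1)`,
the exponential series terminates; it is written out on monomials, free of denominators. -/
noncomputable def besselHeat (s t : R) : R[X] →ₗ[R] R[X] :=
  lsum fun m => ∑ ij ∈ antidiagonal m,
    ((m.choose ij.1 : R) * t ^ ij.2 * (ascPochhammer R ij.2).eval (s + ij.1)) • monomial ij.1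

theorem besselHeat_monomial (s t : R) (m : ℕ) (c : R) :
    besselHeat s t (monomial m c) = ∑ ij ∈ antidiagonal m, monomial ij.1
      ((m.choose ij.1 : R) * t ^ ij.2 * (ascPochhammer R ij.2).eval (s + ij.1) * c) := by
  simp [besselHeat, smul_monomial]

theorem eval_besselHeat_monomial (s t c x : R) (m : ℕ) :
    (besselHeat s t (monomial m c)).eval (t * x) = c * t ^ m * ∑ ij ∈ antidiagonal m,
      (m.choose ij.1 : R) * (ascPochhammer R ij.2).eval (s + ij.1) * x ^ ij.1 := by
  simp only [besselHeat_monomial, eval_finsetSum, mul_sum]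
  refine sum_congr rfl fun ⟨i, j⟩ hij => ?_
  obtain rfl : i + j = m := mem_antidiagonal.1 hij
  rw [eval_monomial]
  ring

theorem besselHeat_zero (s : R) (p : R[X]) : besselHeat s 0 p = p := by
  induction p using Polynomial.induction_on' with
  | add p q hp hq => rw [map_add, hp, hq]
  | monomial m c =>
    rw [besselHeat_monomial, sum_eq_single (m, 0)]
    · simp
    · rintro ⟨i, j⟩ hij hne
      have hj : j ≠ 0 := by
        rintro rfl
        simp_all
      simp [hj]
    · simp

theorem besselHeat_besselHeat (s t₁ t₂ : R) (p : R[X]) :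
    besselHeat s t₁ (besselHeat s t₂ p) = besselHeat s (t₁ + t₂) p := by
  induction p using Polynomial.induction_on' with
  | add p q hp hq => simp only [map_add, hp, hq]
  | monomial m c =>
    let coeff (k l j : ℕ) : R :=
      ((m.choose k * (l + j).choose l : ℕ) : R) * (t₁ ^ l * t₂ ^ j) *
        (ascPochhammer R (l + j)).eval (s + k) * c
    have expand : besselHeat s t₁ (besselHeat s t₂ (monomial m c)) =
        ∑ ij ∈ antidiagonal m, ∑ kl ∈ antidiagonal ij.1,
          monomial kl.1 (coeff kl.1 kl.2 ij.2) := by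
      simp only [besselHeat_monomial, map_sum]
      refine sum_congr rfl fun ⟨i, j⟩ hij => sum_congr rfl fun ⟨k, l⟩ hkl => ?_
      obtain rfl : k + l = i := mem_antidiagonal.1 hkl
      obtain rfl : k + l + j = m := mem_antidiagonal.1 hij
      simp only [coeff]
      rw [← choose_add_mul_choose, ascPochhammer_eval_add_right]
      push_cast
      rw [← add_assoc]
      congr 1
      ring
    have collect (k r : ℕ) : ∑ lj ∈ antidiagonal r, coeff k lj.1 lj.2 =
        (m.choose k : R) * (t₁ + t₂) ^ r * (ascPochhammer R r).eval (s + k) * c := by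
      simp only [(Commute.all t₁ t₂).add_pow', mul_sum, sum_mul]
      refine sum_congr rfl fun ⟨l, j⟩ hlj => ?_
      obtain rfl : l + j = r := mem_antidiagonal.1 hlj
      simp only [coeff, nsmul_eq_mul]
      push_cast
      ring
    rw [expand, sum_antidiagonal_antidiagonal_fst fun k l j => monomial k (coeff k l j),
      besselHeat_monomial]
    simp only [← map_sum, collect]

end

theorem besselHeat_comp_neg_X {R : Type*} [CommRing R] (s t : R) (p : R[X]) :
    (besselHeat s t p).comp (-X) = besselHeat s (-t) (p.comp (-X)) := by
  induction p using Polynomial.induction_on' with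
  | add p q hp hq => simp only [map_add, add_comp, hp, hq]
  | monomial m c =>
    have reflect (k : ℕ) (b : R) : (monomial k b).comp (-X) = monomial k (b * (-1) ^ k) := by
      rw [monomial_comp, neg_pow, ← C_mul_X_pow_eq_monomial]
      simp [mul_assoc]
    rw [reflect, besselHeat_monomial, besselHeat_monomial, ← coe_compRingHom_apply, map_sum]
    refine sum_congr rfl fun ⟨i, j⟩ hij => ?_
    obtain rfl : i + j = m := mem_antidiagonal.1 hij
    have sign : (-t) ^ j * (-1) ^ j = t ^ j := by rw [← mul_pow, neg_mul_neg, mul_one]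
    rw [coe_compRingHom_apply, reflect, pow_add, ← sign]
    congr 1
    ring

/-! ### Poisson mixtures of gamma densities -/

theorem integrable_tsum_of_summable_integral_norm {ι α E : Type*} [Countable ι]
    [MeasurableSpace α] {μ : Measure α} [NormedAddCommGroup E] [CompleteSpace E] {F : ι → α → E}
    (hF_int : ∀ i, Integrable (F i) μ) (hF_sum : Summable fun i => ∫ a, ‖F i a‖ ∂μ) :
    Integrable (fun a => ∑' i, F i a) μ := by
  have hfin : ∫⁻ a, ∑' i, ‖F i a‖ₑ ∂μ ≠ ⊤ := by
    rw [lintegral_tsum fun i => (hF_int i).1.enorm]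
    simp only [← ofReal_integral_norm_eq_lintegral_enorm (hF_int _)]
    exact hF_sum.tsum_ofReal_ne_top
  have hmeas : AEMeasurable (fun a => ∑' i, ‖F i a‖ₑ) μ :=
    AEMeasurable.tsum fun i => (hF_int i).1.enorm
  refine ⟨?_, (lintegral_mono fun a => enorm_tsum_le_tsum_enorm).trans_lt hfin.lt_top⟩
  refine aestronglyMeasurable_of_tendsto_ae Filter.atTop
    (fun s : Finset ι => Finset.aestronglyMeasurable_fun_sum s fun i _ => (hF_int i).1) ?_
  filter_upwards [ae_lt_top' hmeas hfin] with a ha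
  have hsummable : Summable fun i => F i a :=
    .of_nnnorm (ENNReal.tsum_coe_ne_top_iff_summable.1 ha.ne)
  exact hsummable.hasSum

section
variable {s r : ℝ} (hs : 0 < s) (hr : 0 < r)
include hs hr

theorem gammaPDFReal_mul_pow (m : ℕ) {u : ℝ} (hu : 0 < u) :
    gammaPDFReal s r u * u ^ m =
      (ascPochhammer ℝ m).eval s / r ^ m * gammaPDFReal (s + m) r u := by
  have hG := (Gamma_pos_of_pos hs).ne'
  have hA := (ascPochhammer_pos m s hs).ne'
  rw [gammaPDFReal, gammaPDFReal, if_pos hu.le, if_pos hu.le, Gamma_add_natCast_eq hs,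
    rpow_add_natCast hr.ne', add_sub_right_comm, rpow_add_natCast hu.ne']
  field_simp

theorem integral_gammaPDFReal : ∫ u in Set.Ioi 0, gammaPDFReal s r u = 1 := by
  have density_eq : Set.EqOn (gammaPDFReal s r)
      (fun u => r ^ s / Gamma s * (u ^ (s - 1) * exp (-(r * u)))) (Set.Ioi 0) := by
    intro u (hu : 0 < u)
    rw [gammaPDFReal, if_pos hu.le, mul_assoc]
  have hG := (Gamma_pos_of_pos hs).ne'
  rw [setIntegral_congr_fun measurableSet_Ioi density_eq, integral_const_mul,
    integral_rpow_mul_exp_neg_mul_Ioi hs hr, one_div, inv_rpow hr.le]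
  field_simp

theorem integrableOn_gammaPDFReal : IntegrableOn (gammaPDFReal s r) (Set.Ioi 0) :=
  .of_integral_ne_zero (by rw [integral_gammaPDFReal hs hr]; exact one_ne_zero)

theorem integrableOn_gammaPDFReal_mul_pow (m : ℕ) :
    IntegrableOn (fun u => gammaPDFReal s r u * u ^ m) (Set.Ioi 0) :=
  IntegrableOn.congr_fun ((integrableOn_gammaPDFReal (by positivity) hr).const_mul _)
    (fun _ hu => (gammaPDFReal_mul_pow hs hr m hu).symm) measurableSet_Ioi

theorem integral_gammaPDFReal_mul_pow (m : ℕ) :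
    ∫ u in Set.Ioi 0, gammaPDFReal s r u * u ^ m = (ascPochhammer ℝ m).eval s / r ^ m := by
  rw [setIntegral_congr_fun measurableSet_Ioi fun _ hu => gammaPDFReal_mul_pow hs hr m hu,
    integral_const_mul, integral_gammaPDFReal (by positivity) hr, mul_one]

end

/-- `exp x` times the mixture of the gamma densities with shapes `n + s` and rate `r`, with Poisson
weights `exp (-x) * x ^ n / n!`. Leaving out the factor `exp (-x)` matches the Bessel series, and
`x` may be negative, which is the case of `J_ν`. -/
noncomputable def gammaMixture (s r x u : ℝ) : ℝ :=
  ∑' n : ℕ, x ^ n / n.factorial * gammaPDFReal (n + s) r u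

theorem gammaMixture_mul_pow (s r x u : ℝ) (m : ℕ) :
    gammaMixture s r x u * u ^ m =
      ∑' n : ℕ, x ^ n / n.factorial * (gammaPDFReal (n + s) r u * u ^ m) := by
  simp only [gammaMixture, ← tsum_mul_right, mul_assoc]

section
variable {s r : ℝ} (hs : 0 < s) (hr : 0 < r)
include hs hr

theorem integrableOn_gammaMixture_term (x : ℝ) (m n : ℕ) :
    IntegrableOn (fun u => x ^ n / n.factorial * (gammaPDFReal (n + s) r u * u ^ m))
      (Set.Ioi 0) :=
  (integrableOn_gammaPDFReal_mul_pow (by positivity) hr m).const_mul _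

theorem summable_integral_norm_gammaMixture_term (x : ℝ) (m : ℕ) :
    Summable fun n : ℕ =>
      ∫ u in Set.Ioi 0, ‖x ^ n / n.factorial * (gammaPDFReal (n + s) r u * u ^ m)‖ := by
  have integral_norm_term (n : ℕ) :
      ∫ u in Set.Ioi 0, ‖x ^ n / n.factorial * (gammaPDFReal (n + s) r u * u ^ m)‖ =
        |x| ^ n / n.factorial * (ascPochhammer ℝ m).eval (n + s) / r ^ m := by
    have hns : 0 < n + s := by positivity
    rw [mul_div_assoc, ← integral_gammaPDFReal_mul_pow hns hr, ← integral_const_mul]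
    refine setIntegral_congr_fun measurableSet_Ioi fun u (hu : 0 < u) => ?_
    simp only [norm_mul, norm_div, norm_pow, norm_eq_abs, Nat.abs_cast, abs_of_pos hu,
      abs_of_nonneg (gammaPDFReal_nonneg hns hr u)]
  simp only [integral_norm_term]
  exact (hasSum_pow_div_factorial_mul_ascPochhammer |x| s m).summable.div_const _

theorem integrableOn_gammaMixture_mul_pow (x : ℝ) (m : ℕ) :
    IntegrableOn (fun u => gammaMixture s r x u * u ^ m) (Set.Ioi 0) := by
  simp only [gammaMixture_mul_pow]
  exact integrable_tsum_of_summable_integral_norm (integrableOn_gammaMixture_term hs hr x m)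
    (summable_integral_norm_gammaMixture_term hs hr x m)

theorem integral_gammaMixture_mul_pow (x : ℝ) (m : ℕ) :
    ∫ u in Set.Ioi 0, gammaMixture s r x u * u ^ m =
      exp x * (besselHeat s r⁻¹ (X ^ m)).eval (x / r) := by
  have integral_sum := hasSum_integral_of_summable_integral_norm
    (integrableOn_gammaMixture_term hs hr x m) (summable_integral_norm_gammaMixture_term hs hr x m)
  simp only [integral_const_mul, integral_gammaPDFReal_mul_pow (add_pos_of_nonneg_of_pos
    (Nat.cast_nonneg _) hs) hr, ← mul_div_assoc, ← gammaMixture_mul_pow] at integral_sum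
  rw [integral_sum.unique ((hasSum_pow_div_factorial_mul_ascPochhammer x s m).div_const _),
    X_pow_eq_monomial, div_eq_inv_mul x, eval_besselHeat_monomial, inv_pow]
  ring

theorem integrableOn_gammaMixture_mul_eval (x : ℝ) (p : ℝ[X]) :
    IntegrableOn (fun u => gammaMixture s r x u * p.eval u) (Set.Ioi 0) := by
  induction p using Polynomial.induction_on' with
  | add p q hp hq =>
    simp only [eval_add, mul_add]
    exact hp.add hq
  | monomial m c =>
    simp only [eval_monomial, mul_left_comm _ c]
    exact (integrableOn_gammaMixture_mul_pow hs hr x m).const_mul c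

theorem integral_gammaMixture_mul_eval (x : ℝ) (p : ℝ[X]) :
    ∫ u in Set.Ioi 0, gammaMixture s r x u * p.eval u =
      exp x * (besselHeat s r⁻¹ p).eval (x / r) := by
  induction p using Polynomial.induction_on' with
  | add p q hp hq =>
    simp only [eval_add, mul_add, map_add]
    rw [integral_add (integrableOn_gammaMixture_mul_eval hs hr x p)
      (integrableOn_gammaMixture_mul_eval hs hr x q), hp, hq]
  | monomial m c =>
    simp only [eval_monomial, mul_left_comm _ c, integral_const_mul]
    rw [integral_gammaMixture_mul_pow hs hr, ← C_mul_X_pow_eq_monomial, ← smul_eq_C_mul, map_smul,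
      eval_smul, smul_eq_mul, mul_left_comm]

end

/-! ### Bessel kernels -/

theorem besselSeries_term_eq_gammaPDFReal (c ν : ℝ) {a u : ℝ} (ha : 0 < a) (hu : 0 < u) (n : ℕ) :
    (1 / 2) * (u / a) ^ (ν / 2) *
      ((c ^ n / (Gamma ((n : ℝ) + 1) * Gamma ((n : ℝ) + 1 + ν))) *
        (√(u * a) / 2) ^ (2 * (n : ℝ) + ν)) * exp (-u / 2) =
    (c * a / 2) ^ n / n.factorial * gammaPDFReal (n + (ν + 1)) (1 / 2) u := by
  have sqrt_pow : (√(u * a) / 2) ^ (2 * (n : ℝ) + ν) =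
      (u * a / 4) ^ n * (u ^ (ν / 2) * a ^ (ν / 2) / 2 ^ ν) := by
    have hs : 0 < √(u * a) := sqrt_pos.2 (by positivity)
    rw [rpow_add (by positivity), rpow_mul (by positivity), rpow_two, div_pow,
      sq_sqrt (by positivity), rpow_natCast, div_rpow hs.le (by norm_num), sqrt_eq_rpow,
      ← rpow_mul (by positivity), mul_rpow hu.le ha.le]
    ring_nf
  have u_pow : u ^ ((n : ℝ) + (ν + 1) - 1) = u ^ n * (u ^ (ν / 2) * u ^ (ν / 2)) := by
    rw [← rpow_natCast, ← rpow_add hu, ← rpow_add hu]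
    ring_nf
  have half_pow : (1 / 2 : ℝ) ^ ((n : ℝ) + (ν + 1)) = (1 / 2) ^ n * (1 / 2) / 2 ^ ν := by
    rw [one_div, inv_rpow (by norm_num), rpow_add (by norm_num), rpow_add (by norm_num),
      rpow_natCast, rpow_one, mul_inv, mul_inv, inv_pow]
    ring
  have : a ^ (ν / 2) ≠ 0 := by positivity
  rw [gammaPDFReal, if_pos hu.le, sqrt_pow, u_pow, half_pow, div_rpow hu.le ha.le,
    Gamma_nat_eq_factorial, add_right_comm (n : ℝ), ← add_assoc (n : ℝ) ν,
    show -(1 / 2 * u) = -u / 2 by ring]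
  simp only [div_pow, mul_pow, one_pow, show (4 : ℝ) = 2 * 2 by norm_num]
  field_simp

theorem gammaMixture_eq_besselSeries (c ν : ℝ) {a u : ℝ} (ha : 0 < a) (hu : 0 < u) :
    gammaMixture (ν + 1) (1 / 2) (c * a / 2) u = (1 / 2) * (u / a) ^ (ν / 2) *
      (∑' n : ℕ, (c ^ n / (Gamma ((n : ℝ) + 1) * Gamma ((n : ℝ) + 1 + ν))) *
        (√(u * a) / 2) ^ (2 * (n : ℝ) + ν)) * exp (-u / 2) := by
  rw [gammaMixture, ← tsum_mul_left, ← tsum_mul_right]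
  exact tsum_congr fun n => (besselSeries_term_eq_gammaPDFReal c ν ha hu n).symm

theorem gammaMixture_eq_besselJ (ν : ℝ) {a u : ℝ} (ha : 0 < a) (hu : 0 < u) :
    gammaMixture (ν + 1) (1 / 2) (-a / 2) u =
      (1 / 2) * (u / a) ^ (ν / 2) * besselJ ν √(u * a) * exp (-u / 2) := by
  rw [← neg_one_mul, gammaMixture_eq_besselSeries (-1) ν ha hu, besselJ]

theorem gammaMixture_eq_besselI (ν : ℝ) {a u : ℝ} (ha : 0 < a) (hu : 0 < u) :
    gammaMixture (ν + 1) (1 / 2) (a / 2) u =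
      (1 / 2) * (u / a) ^ (ν / 2) * besselI ν √(u * a) * exp (-u / 2) := by
  rw [← one_mul a, gammaMixture_eq_besselSeries 1 ν ha hu, besselI]
  simp only [one_mul, one_pow]

theorem integral_gammaMixture_half_mul_eval {s : ℝ} (hs : 0 < s) (a : ℝ) (p : ℝ[X]) :
    ∫ u in Set.Ioi 0, gammaMixture s (1 / 2) (a / 2) u * p.eval u =
      exp (a / 2) * (besselHeat s 2 p).eval a := by
  rw [integral_gammaMixture_mul_eval hs one_half_pos, one_div, inv_inv,
    div_inv_eq_mul, div_mul_cancel₀ a two_ne_zero]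

theorem typeIIP_eq_eval_besselHeat {ν : ℝ} (hν : -1 < ν) {N : ℕ} (a : Fin N → ℝ) (i : Fin N)
    {y : ℝ} (hy : 0 < y) :
    typeIIP ν a i y = (besselHeat (ν + 1) (-2) (Lagrange.nodal (Iio i) a)).eval y := by
  let p : ℝ[X] := (Lagrange.nodal (Iio i) a).comp (-X)
  have integrand_eq : Set.EqOn
      (fun u => (1 / 2) * (u / y) ^ (ν / 2) * besselJ ν √(u * y) * exp ((y - u) / 2) *
        ∏ ℓ ∈ Iio i, (-u - a ℓ))
      (fun u => exp (y / 2) * (gammaMixture (ν + 1) (1 / 2) (-y / 2) u * p.eval u))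
      (Set.Ioi 0) := by
    intro u hu
    have exp_split : exp ((y - u) / 2) = exp (y / 2) * exp (-u / 2) := by
      rw [← exp_add]
      ring_nf
    simp only [p, eval_comp, eval_neg, eval_X, Lagrange.eval_nodal, exp_split,
      gammaMixture_eq_besselJ ν hy hu]
    ring
  have exp_cancel : exp (y / 2) * exp (-y / 2) = 1 := by
    rw [← exp_add, neg_div, add_neg_cancel, exp_zero]
  rw [typeIIP, setIntegral_congr_fun measurableSet_Ioi integrand_eq, integral_const_mul,
    integral_gammaMixture_half_mul_eval (by linarith), ← mul_assoc, exp_cancel, one_mul,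
    ← neg_neg (2 : ℝ), ← besselHeat_comp_neg_X, neg_neg]
  simp only [eval_comp, eval_neg, eval_X, neg_neg]

theorem typeIQ_eq_sum_gammaMixture (ν : ℝ) {N : ℕ} {a : Fin N → ℝ} (ha : ∀ ℓ, 0 < a ℓ)
    (k : Fin N) {y : ℝ} (hy : 0 < y) :
    typeIQ ν a k y = ∑ ℓ ∈ Iic k, exp (-(a ℓ / 2)) / (∏ j ∈ (Iic k).erase ℓ, (a ℓ - a j)) *
      gammaMixture (ν + 1) (1 / 2) (a ℓ / 2) y := by
  refine sum_congr rfl fun ℓ _ => ?_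
  have exp_split : exp (-(a ℓ + y) / 2) = exp (-(a ℓ / 2)) * exp (-y / 2) := by
    rw [← exp_add]
    ring_nf
  rw [gammaMixture_eq_besselI ν (ha ℓ) hy, exp_split, mul_comm (a ℓ) y]
  ring

theorem integral_eval_mul_typeIQ {ν : ℝ} (hν : -1 < ν) {N : ℕ} {a : Fin N → ℝ}
    (ha : ∀ ℓ, 0 < a ℓ) (k : Fin N) (p : ℝ[X]) :
    ∫ y in Set.Ioi 0, p.eval y * typeIQ ν a k y =
      ∑ ℓ ∈ Iic k, (besselHeat (ν + 1) 2 p).eval (a ℓ) /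
        ∏ j ∈ (Iic k).erase ℓ, (a ℓ - a j) := by
  have hs : 0 < ν + 1 := by linarith
  have integrand_eq : Set.EqOn (fun y => p.eval y * typeIQ ν a k y)
      (fun y => ∑ ℓ ∈ Iic k, exp (-(a ℓ / 2)) / (∏ j ∈ (Iic k).erase ℓ, (a ℓ - a j)) *
        (gammaMixture (ν + 1) (1 / 2) (a ℓ / 2) y * p.eval y)) (Set.Ioi 0) := by
    intro y hy
    simp only [typeIQ_eq_sum_gammaMixture ν ha k hy, mul_sum]
    exact sum_congr rfl fun ℓ _ => by ring
  rw [setIntegral_congr_fun measurableSet_Ioi integrand_eq, integral_finsetSum _ fun ℓ _ =>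
    (integrableOn_gammaMixture_mul_eval hs one_half_pos _ p).const_mul _]
  refine sum_congr rfl fun ℓ _ => ?_
  have exp_cancel : exp (-(a ℓ / 2)) * exp (a ℓ / 2) = 1 := by
    rw [← exp_add, neg_add_cancel, exp_zero]
  rw [integral_const_mul, integral_gammaMixture_half_mul_eval hs, div_mul_eq_mul_div, ← mul_assoc,
    exp_cancel, one_mul]

/-! ### Divided differences and biorthonormality -/

theorem sum_prod_sub_div_prod_sub {ι F : Type*} [DecidableEq ι] [Field F] {s t : Finset ι}
    {v : ι → F} (hv : Set.InjOn v s) (hts : #t < #s) :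
    ∑ ℓ ∈ s, (∏ j ∈ t, (v ℓ - v j)) / ∏ j ∈ s.erase ℓ, (v ℓ - v j) =
      if #t + 1 = #s then 1 else 0 := by
  have monic : (Lagrange.nodal t v).Monic := Lagrange.nodal_monic
  have degree_lt : (Lagrange.nodal t v).degree < #s := by
    rw [Lagrange.degree_nodal]
    exact_mod_cast hts
  simp only [← Lagrange.eval_nodal (s := t)]
  rw [← Lagrange.coeff_eq_sum hv degree_lt]
  split_ifs with h
  · rw [← h, Nat.add_sub_cancel, ← Lagrange.natDegree_nodal (s := t) (v := v)]
    exact monic.coeff_natDegree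
  · exact coeff_eq_zero_of_natDegree_lt (by rw [Lagrange.natDegree_nodal]; omega)

theorem sum_Iic_prod_Iio_div_prod_erase {N : ℕ} {F : Type*} [Field F] {a : Fin N → F}
    (ha : Function.Injective a) (i k : Fin N) :
    ∑ ℓ ∈ Iic k, (∏ j ∈ Iio i, (a ℓ - a j)) / ∏ j ∈ (Iic k).erase ℓ, (a ℓ - a j) =
      if i = k then 1 else 0 := by
  rcases lt_or_ge k i with hki | hik
  · rw [if_neg hki.ne']
    refine sum_eq_zero fun ℓ hℓ => ?_
    have hℓi : ℓ ∈ Iio i := mem_Iio.2 ((mem_Iic.1 hℓ).trans_lt hki)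
    rw [prod_eq_zero hℓi (sub_self _), zero_div]
  · rw [sum_prod_sub_div_prod_sub ha.injOn (by simpa [Nat.lt_succ_iff] using hik)]
    simp [Fin.ext_iff]

theorem typeII_typeI_biorthonormal_general {ν : ℝ} (hν : -1 < ν) {N : ℕ} {a : Fin N → ℝ}
    (ha_pos : ∀ ℓ, 0 < a ℓ) (ha_inj : Function.Injective a) (i k : Fin N) :
    ∫ y in Set.Ioi (0 : ℝ), typeIIP ν a i y * typeIQ ν a k y = if i = k then 1 else 0 := by
  have typeIIP_polynomial : Set.EqOn (fun y => typeIIP ν a i y * typeIQ ν a k y)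
      (fun y => (besselHeat (ν + 1) (-2) (Lagrange.nodal (Iio i) a)).eval y * typeIQ ν a k y)
      (Set.Ioi 0) :=
    fun y hy => congrArg (· * typeIQ ν a k y) (typeIIP_eq_eval_besselHeat hν a i hy)
  rw [setIntegral_congr_fun measurableSet_Ioi typeIIP_polynomial,
    integral_eval_mul_typeIQ hν ha_pos, besselHeat_besselHeat, add_neg_cancel, besselHeat_zero]
  simp only [Lagrange.eval_nodal]
  exact sum_Iic_prod_Iio_div_prod_erase ha_inj i k

end

/-- Biorthonormality of the type-II and type-I multiple orthogonal functions:
`∫₀^∞ P^{(i)}(y) Q^{(k)}(y) dy = δ_{ik}`. -/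
theorem typeII_typeI_biorthonormal
    (ν : ℝ) (hν : -1 < ν) (N : ℕ) (hN : 1 ≤ N)
    (a : Fin N → ℝ) (hapos : ∀ ℓ, 0 < a ℓ) (hamono : StrictMono a)
    (i k : Fin N) :
    ∫ y in Set.Ioi (0 : ℝ), typeIIP ν a i y * typeIQ ν a k y
      = if i = k then 1 else 0 := by
  exact typeII_typeI_biorthonormal_general hν hapos hamono.injective i k
end

section
/- Let ν > −1, N ≥ 1, let 0 < a₁ < ⋯ < a_N be distinct positive reals, let M ≥ 1, let 0 < t₁ < ⋯ < t_M, let 1 ≤ N_m ≤ N for each 1 ≤ m ≤ M, and for each m let x₁^{(m)}, …, x_{N_m}^{(m)} be distinct positive reals. Define the space-time correlation kernel K(s, x; t, y) = Σ_{ℓ=1}^N p^{(ν)}(s, x | a_ℓ) · ∫₀^∞ [ ∏_{k ≠ ℓ} (a_k + v)/(a_k − a_ℓ) ] · q^{(ν)}_t(v, y) dv − 1(s > t) · p^{(ν)}(s−t, x | y). Define the multitime density of the noncolliding BESQ^{(ν)} process, for configurations (x₁^{(m)}, …, x_N^{(m)}) ∈ (0,∞)^N at each time t_m, by p(x^{(1)},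 …, x^{(M)}) = ∏_{1≤i<j≤N} (x_j^{(M)} − x_i^{(M)}) · ∏_{m=1}^{M−1} det_{1≤i,j≤N}[ p^{(ν)}(t_{m+1} − t_m, x_i^{(m+1)} | x_j^{(m)}) ] · det_{1≤i,j≤N}[ p^{(ν)}(t₁, x_i^{(1)} | a_j) ] / ∏_{1≤i<j≤N} (a_j − a_i). Then [ ∏_{m=1}^M 1/(N − N_m)! ] · ∫ p(x^{(1)}, …, x^{(M)}) ∏_{m=1}^M dx_{N_m+1}^{(m)} ⋯ dx_N^{(m)} (each integrated coordinate over (0, ∞)) = det[ K(t_m, x_i^{(m)}; t_n, x_j^{(n)}) ], the determinant of the (Σ_m N_m) × (Σ_m N_m) block matrix with rows indexed by (m, i), 1 ≤ i ≤ N_m, and columns by (n, j), 1 ≤ j ≤ N_n. -/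
open MeasureTheory Real

/-- The BESQ^{(ν)} transition probability density `p^{(ν)}(t, y | x)`. -/
noncomputable def besqP (ν t y x : ℝ) : ℝ :=
  (1 / (2 * t)) * (y / x) ^ (ν / 2) * Real.exp (-(x + y) / (2 * t)) *
    besselI ν (Real.sqrt (x * y) / t)

/-- The kernel `q^{(ν)}_t(v, y)`, real form of `p^{(ν)}(−t, −v | y)`. -/
noncomputable def besqQ (ν t v y : ℝ) : ℝ :=
  (1 / (2 * t)) * (v / y) ^ (ν / 2) * Real.exp ((y - v) / (2 * t)) *
    besselJ ν (Real.sqrt (v * y) / t)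

/-- The space-time correlation kernel
`K(s, x; t, y) = Σ_ℓ p^{(ν)}(s, x|a_ℓ) ∫₀^∞ ∏_{k≠ℓ} (a_k+v)/(a_k−a_ℓ) q^{(ν)}_t(v, y) dv
  − 1(s>t) p^{(ν)}(s−t, x|y)`. -/
noncomputable def corrK (ν : ℝ) {N : ℕ} (a : Fin N → ℝ) (s x t y : ℝ) : ℝ :=
  (∑ ℓ : Fin N, besqP ν s x (a ℓ) *
      ∫ v in Set.Ioi (0 : ℝ),
        (∏ k ∈ Finset.univ.erase ℓ, ((a k + v) / (a k - a ℓ))) * besqQ ν t v y) -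
    (if t < s then besqP ν (s - t) x y else 0)

/-- The Vandermonde product `h_N(x) = ∏_{i<j} (x_j − x_i)`. -/
noncomputable def vdm {N : ℕ} (x : Fin N → ℝ) : ℝ :=
  ∏ i : Fin N, ∏ j ∈ Finset.Ioi i, (x j - x i)

/-- The full configuration at time `t_m`: the first `N_m` coordinates are the
correlation points `x m i`, the remaining ones are the integration variables. -/
noncomputable def fullConfig (N M : ℕ) (Nm : ℕ → ℕ) (x : ℕ → ℕ → ℝ)
    (z : ((m : Fin M) × Fin (N - Nm m)) → ℝ) (m : Fin M) : Fin N → ℝ :=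
  fun i => if h : (i : ℕ) < Nm m then x m i
    else z ⟨m, ⟨(i : ℕ) - Nm m, by have := i.isLt; omega⟩⟩

/-!
Substituting Karlin–McGregor determinants, the multitime density is itself a determinant: the
block matrix `[φ(t_m) ψ(t_n) - 1(t_n < t_m) P(t_m, t_n)]` is a product of two block triangular
matrices, up to a cyclic permutation of the blocks, whose determinants multiply to the density.
The kernel `K` in the entries composes with itself as a projection up to time ordering, so
expanding the determinant along the row and column of one point and integrating that point out
multiplies the remaining minor by the number of particles still unobserved at that time;
iterating produces the factorials.

The biorthogonal functions are explicit because the squared Bessel semigroup acts on polynomials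
as a Taylor shift conjugated by `Xⁿ ↦ Γ(n + 1 + ν) Xⁿ`, hence as a group. Evolving the Lagrange
basis at the nodes `a_ℓ` backwards by `t` gives the functions biorthonormal to `p(t, · | a_ℓ)`,
which are also the integrals against `q_t` in `K`; being unitriangular on monomials, the shift
preserves Vandermonde determinants, which turns the `h`-transform into the final Slater
determinant.
-/

section DeterminantIdentities

open Matrix Polynomial

variable {R ι : Type*} [CommRing R] [Fintype ι] [DecidableEq ι]

theorem det_fromBlocks_replicate_of_isLeftRegular {A : Matrix ι ι R} (hA : IsLeftRegular A.det)
    (b c : ι → R) (d : R) :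
    (fromBlocks A (replicateCol Unit b) (replicateRow Unit c) (of fun _ _ => d)).det =
      A.det * d - c ⬝ᵥ A.adjugate *ᵥ b := by
  set B := replicateCol Unit b
  set C := replicateRow Unit c
  set D : Matrix Unit Unit R := of fun _ _ => d
  have hfactor : fromBlocks A B C D * fromBlocks 1 (-(A.adjugate * B)) 0 (A.det • 1) =
      fromBlocks A 0 C (A.det • D - C * (A.adjugate * B)) := by
    rw [fromBlocks_multiply]
    congr 1
    · simp
    · simp [← Matrix.mul_assoc, mul_adjugate]
    · simp
    · rw [Matrix.mul_neg, Matrix.mul_smul, Matrix.mul_one, neg_add_eq_sub]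
  have hdet := congrArg det hfactor
  rw [det_mul, det_fromBlocks_zero₂₁, det_fromBlocks_zero₁₂, det_one, one_mul,
    det_unique (A.det • (1 : Matrix Unit Unit R)), det_unique (_ - _), mul_comm,
    ← replicateCol_mulVec] at hdet
  exact hA (by simpa [C, D] using hdet)

theorem det_fromBlocks_replicate (A : Matrix ι ι R) (b c : ι → R) (d : R) :
    (fromBlocks A (replicateCol Unit b) (replicateRow Unit c) (of fun _ _ => d)).det =
      A.det * d - c ⬝ᵥ A.adjugate *ᵥ b := by
  -- `X + A` has a monic determinant, so the identity holds for it; then set `X = 0`.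
  have hreg : IsLeftRegular (charmatrix (-A)).det := (charpoly_monic (-A)).isRegular.left
  have heval : (evalRingHom (0 : R)).mapMatrix (charmatrix (-A)) = A := by
    ext i j
    simp [charmatrix_apply, diagonal_apply, apply_ite (eval (0 : R))]
  have h := congrArg (evalRingHom (0 : R))
    (det_fromBlocks_replicate_of_isLeftRegular hreg (C ∘ b) (C ∘ c) (C d))
  have hcomp (v : ι → R) : evalRingHom (0 : R) ∘ C ∘ v = v := by
    ext; simp
  have hmulVec : evalRingHom (0 : R) ∘ ((charmatrix (-A)).adjugate *ᵥ C ∘ b) =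
      A.adjugate *ᵥ b := by
    ext i
    rw [Function.comp_apply, RingHom.map_mulVec, ← RingHom.mapMatrix_apply, RingHom.map_adjugate,
      heval, hcomp]
  rw [map_sub, map_mul, RingHom.map_dotProduct, hmulVec, hcomp, RingHom.map_det,
    RingHom.map_det, heval, RingHom.mapMatrix_apply, fromBlocks_map, ← RingHom.mapMatrix_apply,
    heval] at h
  convert h using 2
  · congr 2 <;> ext <;> simp
  · simp

theorem sum_sum_adjugate_mul_sub (A : Matrix ι ι R) (d e : ι → R) :
    ∑ i, ∑ j, A.adjugate j i * ((d i - e j) * A i j) = (∑ i, d i - ∑ j, e j) * A.det := by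
  have hrow (i : ι) : ∑ j, A i j * A.adjugate j i = A.det := by
    simpa [mul_apply] using congrFun₂ (mul_adjugate A) i i
  have hcol (j : ι) : ∑ i, A.adjugate j i * A i j = A.det := by
    simpa [mul_apply] using congrFun₂ (adjugate_mul A) j j
  calc ∑ i, ∑ j, A.adjugate j i * ((d i - e j) * A i j)
      = ∑ i, d i * ∑ j, A i j * A.adjugate j i - ∑ i, ∑ j, e j * (A.adjugate j i * A i j) := by
        simp only [Finset.mul_sum, ← Finset.sum_sub_distrib]
        exact Finset.sum_congr rfl fun i _ => Finset.sum_congr rfl fun j _ => by ring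
    _ = ∑ i, d i * ∑ j, A i j * A.adjugate j i - ∑ j, e j * ∑ i, A.adjugate j i * A i j := by
        rw [Finset.sum_comm (γ := ι)]
        simp only [Finset.mul_sum]
    _ = (∑ i, d i - ∑ j, e j) * A.det := by
        simp only [hrow, hcol, ← Finset.sum_mul, sub_mul]

theorem det_comp_of_blockTriangular {J α : Type*} [Fintype J] [DecidableEq J] [LinearOrder α]
    {B : Matrix J J (Matrix ι ι R)} (b : J ≃ α) (hB : B.BlockTriangular b) :
    (comp J J ι ι R B).det = ∏ k, (B k k).det := by
  have htri : (comp J J ι ι R B).BlockTriangular (b ∘ Prod.fst) := fun p q hpq => by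
    rw [comp_apply, hB hpq, Matrix.zero_apply]
  let := Fintype.ofEquiv J b
  rw [htri.det_fintype, ← b.prod_comp]
  refine Finset.prod_congr rfl fun k _ => ?_
  let e : ι ≃ {p : J × ι // b p.1 = b k} :=
    { toFun i := ⟨(k, i), rfl⟩
      invFun p := p.1.2
      left_inv _ := rfl
      right_inv := by
        rintro ⟨⟨_, _⟩, h⟩
        obtain rfl := b.injective h
        rfl }
  rw [← det_submatrix_equiv_self e]
  rfl

theorem det_comp_submatrix {J : Type*} [Fintype J] [DecidableEq J] (σ : Equiv.Perm J)
    (B : Matrix J J (Matrix ι ι R)) :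
    (comp J J ι ι R (B.submatrix σ id)).det =
      (Equiv.Perm.sign σ : ℤ) ^ Fintype.card ι * (comp J J ι ι R B).det := by
  have hsub : comp J J ι ι R (B.submatrix σ id) =
      (comp J J ι ι R B).submatrix (Equiv.prodCongrLeft fun _ : ι => σ) id := rfl
  rw [hsub, det_permute, Equiv.Perm.sign_prodCongrLeft, Finset.prod_const, Finset.card_univ]
  push_cast
  rfl

/-- The block matrix with blocks `Φ m * Ψ n - 1(n < m) L m n`: the Eynard–Mehta kernel evaluated at
a full configuration, `ι` indexing the points present at each time. -/
def eynardMehtaMatrix {M : ℕ} (Φ Ψ : Fin (M + 1) → Matrix ι ι R)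
    (L : Fin (M + 1) → Fin (M + 1) → Matrix ι ι R) :
    Matrix (Fin (M + 1)) (Fin (M + 1)) (Matrix ι ι R) :=
  of fun m n => Φ m * Ψ n - if n < m then L m n else 0

section

variable {M : ℕ} (Φ Ψ : Fin (M + 1) → Matrix ι ι R)
  (L : Fin (M + 1) → Fin (M + 1) → Matrix ι ι R)

/-- The lower triangular left factor of `eynardMehtaMatrix`, a column of `Φ m` followed by the
blocks `1(n < m) L m n`. -/
def eynardMehtaLower : Matrix (Fin (M + 1)) (Fin (M + 1)) (Matrix ι ι R) :=
  of fun m => Fin.cases (Φ m) fun k => if k.castSucc < m then L m k.castSucc else 0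

/-- The right factor of `eynardMehtaMatrix`, a row of `Ψ n` on top of the blocks `-1(n = k)`; moving
that row to the bottom makes it triangular. -/
def eynardMehtaUpper : Matrix (Fin (M + 1)) (Fin (M + 1)) (Matrix ι ι R) :=
  of fun k n => Fin.cases (Ψ n) (fun k' => if n = k'.castSucc then -1 else 0) k

theorem eynardMehtaLower_mul_eynardMehtaUpper : eynardMehtaLower Φ L * eynardMehtaUpper Ψ =
    eynardMehtaMatrix Φ Ψ L := by
  ext1 m n
  simp only [eynardMehtaLower, eynardMehtaUpper, eynardMehtaMatrix, Matrix.mul_apply,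
    Fin.sum_univ_succ, of_apply, Fin.cases_zero, Fin.cases_succ, sub_eq_add_neg]
  congr 1
  cases n using Fin.lastCases with
  | last => simp [(Fin.le_last m).not_gt, (Fin.castSucc_lt_last _).ne']
  | cast n =>
    by_cases hnm : n.castSucc < m <;> simp [Fin.castSucc_inj, hnm]

theorem det_comp_eynardMehtaLower :
    (comp _ _ ι ι R (eynardMehtaLower Φ L)).det =
      (Φ 0).det * ∏ m : Fin M, (L m.succ m.castSucc).det := by
  have h : (eynardMehtaLower Φ L).BlockTriangular OrderDual.toDual := fun m k hmk => by
    obtain ⟨k, rfl⟩ := Fin.exists_succ_eq.2 (Fin.ne_zero_of_lt (show m < k from hmk))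
    exact if_neg (Fin.castSucc_lt_iff_succ_le.not.2 (not_le.2 hmk))
  rw [det_comp_of_blockTriangular OrderDual.toDual h, Fin.prod_univ_succ]
  simp [eynardMehtaLower]

theorem det_comp_eynardMehtaUpper :
    (comp _ _ ι ι R (eynardMehtaUpper Ψ)).det = (Ψ (Fin.last M)).det := by
  have h : ((eynardMehtaUpper Ψ).submatrix (finRotate (M + 1)) id).BlockTriangular
      OrderDual.toDual := fun m k hmk => by
    obtain ⟨m, rfl⟩ := Fin.exists_castSucc_eq.2 (Fin.ne_last_of_lt (show m < k from hmk))
    simp [eynardMehtaUpper, Fin.coeSucc_eq_succ, (show m.castSucc < k from hmk).ne']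
  have hdet := det_comp_submatrix (finRotate (M + 1)) (eynardMehtaUpper Ψ)
  rw [det_comp_of_blockTriangular OrderDual.toDual h, Fin.prod_univ_castSucc,
    sign_finRotate] at hdet
  have hsign : ((-1 : R) ^ Fintype.card ι) ^ M * (Ψ (Fin.last M)).det =
      ((-1) ^ M) ^ Fintype.card ι * (comp _ _ ι ι R (eynardMehtaUpper Ψ)).det := by
    simpa [eynardMehtaUpper, Fin.coeSucc_eq_succ, det_neg] using hdet
  rw [pow_right_comm] at hsign
  exact (((isUnit_one.neg.pow M).pow _).mul_left_cancel hsign).symm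

theorem det_comp_eynardMehtaMatrix :
    (comp _ _ ι ι R (eynardMehtaMatrix Φ Ψ L)).det =
      (Ψ (Fin.last M)).det * (∏ m : Fin M, (L m.succ m.castSucc).det) * (Φ 0).det := by
  rw [← eynardMehtaLower_mul_eynardMehtaUpper, ← compRingEquiv_apply, map_mul, compRingEquiv_apply,
    compRingEquiv_apply, det_mul, det_comp_eynardMehtaLower, det_comp_eynardMehtaUpper]
  ring

end

end DeterminantIdentities

section KernelMatrices

open Matrix Filter Asymptotics
open scoped Finset

variable {T X : Type*}

/-- The matrix `K(σᵢ, zᵢ; σⱼ, zⱼ)` of a space-time kernel `K` at the points `zᵢ`, observed at the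
times `σᵢ`. -/
def kernelMatrix {ι : Type*} (K : T → X → T → X → ℝ) (σ : ι → T) (z : ι → X) : Matrix ι ι ℝ :=
  of fun i j => K (σ i) (z i) (σ j) (z j)

theorem det_kernelMatrix_comp_equiv {ι κ : Type*} [Fintype ι] [DecidableEq ι] [Fintype κ]
    [DecidableEq κ] (K : T → X → T → X → ℝ) (e : κ ≃ ι) (σ : ι → T) (z : ι → X) :
    (kernelMatrix K (σ ∘ e) (z ∘ e)).det = (kernelMatrix K σ z).det :=
  det_submatrix_equiv_self e (kernelMatrix K σ z)

variable [MeasurableSpace X]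

theorem integrable_of_isBigO_principal {f g : X → ℝ} {μ : Measure X} {s : Set X}
    (hs : ∀ᵐ x ∂μ, x ∈ s) (hf : AEStronglyMeasurable f μ) (hfg : f =O[𝓟 s] g)
    (hg : Integrable g μ) : Integrable f μ := by
  obtain ⟨C, hC⟩ := isBigO_principal.1 hfg
  exact (hg.norm.const_mul C).mono' hf (hs.mono hC)

/-- A measurable space-time kernel with `|K(m, x; n, y)| ≤ C f_m(x) g_n(y)` for `x, y` in a set `S`
of full measure, where `f_m g_m` is integrable for each time `m`. This makes every integral
occurring in the composition of such kernels absolutely convergent. -/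
structure IsDominatedKernel (K : T → X → T → X → ℝ) (f g : T → X → ℝ) (S : Set X)
    (μ : Measure X) : Prop where
  ae_mem : ∀ᵐ z ∂μ, z ∈ S
  integrable_dom : ∀ m, Integrable (fun z => f m z * g m z) μ
  measurable : ∀ m n, Measurable fun z : X × X => K m z.1 n z.2
  isBigO : ∀ m n, (fun z : X × X => K m z.1 n z.2) =O[𝓟 (S ×ˢ S)] fun z => f m z.1 * g n z.2

namespace IsDominatedKernel

variable {K L : T → X → T → X → ℝ} {f g : T → X → ℝ} {S : Set X} {μ : Measure X}

theorem sub (hK : IsDominatedKernel K f g S μ) (hL : IsDominatedKernel L f g S μ) :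
    IsDominatedKernel (fun m x n y => K m x n y - L m x n y) f g S μ where
  ae_mem := hK.ae_mem
  integrable_dom := hK.integrable_dom
  measurable m n := (hK.measurable m n).sub (hL.measurable m n)
  isBigO m n := (hK.isBigO m n).sub (hL.isBigO m n)

theorem integrable_comp (hK : IsDominatedKernel K f g S μ) (hL : IsDominatedKernel L f g S μ)
    (m r n : T) {x y : X} (hx : x ∈ S) (hy : y ∈ S) :
    Integrable (fun z => K m x r z * L r z n y) μ := by
  have hleft : Tendsto (fun z => (x, z)) (𝓟 S) (𝓟 (S ×ˢ S)) :=
    tendsto_principal_principal.2 fun z hz => ⟨hx, hz⟩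
  have hright : Tendsto (fun z => (z, y)) (𝓟 S) (𝓟 (S ×ˢ S)) :=
    tendsto_principal_principal.2 fun z hz => ⟨hz, hy⟩
  refine integrable_of_isBigO_principal hK.ae_mem
    (((hK.measurable m r).comp measurable_prodMk_left).mul
      ((hL.measurable r n).comp measurable_prodMk_right)).aestronglyMeasurable
    (((hK.isBigO m r).comp_tendsto hleft).mul ((hL.isBigO r n).comp_tendsto hright)) ?_
  refine ((hK.integrable_dom r).const_mul (f m x * g n y)).congr (.of_forall fun z => ?_)
  simp only [Function.comp_apply]
  ring

theorem integrable_diag (hK : IsDominatedKernel K f g S μ) (r : T) :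
    Integrable (fun z => K r z r z) μ :=
  integrable_of_isBigO_principal hK.ae_mem
    ((hK.measurable r r).comp (measurable_id.prodMk measurable_id)).aestronglyMeasurable
    ((hK.isBigO r r).comp_tendsto (k := fun z => (z, z))
      (tendsto_principal_principal.2 fun _ hz => ⟨hz, hz⟩))
    (hK.integrable_dom r)

variable {ι : Type*} [Fintype ι] [DecidableEq ι]

theorem measurable_det_kernelMatrix (hK : IsDominatedKernel K f g S μ) (σ : ι → T) :
    Measurable fun z : ι → X => (kernelMatrix K σ z).det := by
  simp only [det_apply]
  refine Finset.measurable_sum _ fun τ _ => (Finset.measurable_prod _ fun i _ => ?_).const_smul _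
  have hpair : Measurable fun z : ι → X => (z (τ i), z i) :=
    (measurable_pi_apply _).prodMk (measurable_pi_apply _)
  exact (hK.measurable _ _).comp hpair

theorem isBigO_det_kernelMatrix (hK : IsDominatedKernel K f g S μ) (σ : ι → T) :
    (fun z : ι → X => (kernelMatrix K σ z).det) =O[𝓟 (Set.univ.pi fun _ => S)]
      fun z => ∏ i, f (σ i) (z i) * g (σ i) (z i) := by
  simp only [det_apply]
  refine IsBigO.fun_sum fun τ _ => IsBigO.const_smul_left ?_ _
  have hentry (i : ι) : (fun z : ι → X => kernelMatrix K σ z (τ i) i)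
      =O[𝓟 (Set.univ.pi fun _ => S)] fun z => f (σ (τ i)) (z (τ i)) * g (σ i) (z i) :=
    (hK.isBigO _ _).comp_tendsto (k := fun z : ι → X => (z (τ i), z i))
      (tendsto_principal_principal.2 fun z hz => ⟨hz _ trivial, hz _ trivial⟩)
  refine (IsBigO.finsetProd fun i _ => hentry i).congr_right fun z => ?_
  rw [Finset.prod_mul_distrib, Finset.prod_mul_distrib,
    Equiv.prod_comp τ fun i => f (σ i) (z i)]

theorem integrable_det_kernelMatrix [SigmaFinite μ] {κ β : Type*} [Fintype κ] [DecidableEq κ]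
    [Fintype β] [DecidableEq β] (hK : IsDominatedKernel K f g S μ) (σ : κ → T) (ρ : β → T)
    {x : κ → X} (hx : ∀ i, x i ∈ S) :
    Integrable (fun z : β → X => (kernelMatrix K (Sum.elim σ ρ) (Sum.elim x z)).det)
      (Measure.pi fun _ => μ) := by
  have hmeas : Measurable fun z : β → X => (Sum.elim x z : κ ⊕ β → X) :=
    measurable_pi_iff.2 <| Sum.rec (fun _ => measurable_const) fun b => measurable_pi_apply b
  have hmaps : Tendsto (fun z : β → X => (Sum.elim x z : κ ⊕ β → X))
      (𝓟 (Set.univ.pi fun _ => S)) (𝓟 (Set.univ.pi fun _ => S)) :=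
    tendsto_principal_principal.2 fun z hz => Sum.rec (fun i _ => hx i) fun b _ => hz b trivial
  refine integrable_of_isBigO_principal (s := Set.univ.pi fun _ => S) ?_
    ((hK.measurable_det_kernelMatrix _).comp hmeas).aestronglyMeasurable
    ((hK.isBigO_det_kernelMatrix _).comp_tendsto hmaps) ?_
  · filter_upwards [eventually_all.2 fun b : β =>
      Measure.tendsto_eval_ae_ae.eventually hK.ae_mem] with z hz b _ using hz b
  · simp only [Function.comp_def, Fintype.prod_sum_type, Sum.elim_inl, Sum.elim_inr]
    exact (Integrable.fintype_prod fun b => hK.integrable_dom (ρ b)).const_mul _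

end IsDominatedKernel

theorem card_fiber_eq_sum_sub_sum [LinearOrder T] {ι : Type*} [Fintype ι] (σ : ι → T) (r : T) :
    (#{i | σ i = r} : ℝ) =
      ∑ i, (if σ i ≤ r then 1 else 0) - ∑ i, if σ i < r then 1 else 0 := by
  rw [Finset.natCast_card_filter, ← Finset.sum_sub_distrib]
  refine Finset.sum_congr rfl fun i _ => ?_
  rcases lt_trichotomy (σ i) r with h | h | h
  · simp [h, h.le, h.ne]
  · simp [h]
  · simp [h.not_ge, h.not_gt, h.ne']

theorem card_filter_sumElim [DecidableEq T] {κ β : Type*} [Fintype κ] [Fintype β] (σ : κ → T)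
    (ρ : β → T) (r : T) :
    #{i | Sum.elim σ ρ i = r} = #{i | σ i = r} + #{b | ρ b = r} := by
  simp only [Finset.card_filter, Fintype.sum_sum_type]
  rfl

/-- A dominated kernel that reproduces itself under composition up to time ordering and whose
diagonal has total mass `N` at each time: the abstract form of the correlation kernel of `N`
noncolliding particles. -/
structure IsReproducingKernel [LinearOrder T] (K : T → X → T → X → ℝ) (N : ℝ) (f g : T → X → ℝ)
    (S : Set X) (μ : Measure X) : Prop extends IsDominatedKernel K f g S μ where
  integral_diag : ∀ r, ∫ z, K r z r z ∂μ = N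
  integral_comp : ∀ m r n, ∀ x ∈ S, ∀ y ∈ S, ∫ z, K m x r z * K r z n y ∂μ =
    ((if m ≤ r then 1 else 0) - if n < r then 1 else 0) * K m x n y

namespace IsReproducingKernel

variable [LinearOrder T] {K : T → X → T → X → ℝ} {N : ℝ} {f g : T → X → ℝ} {S : Set X}
  {μ : Measure X}

theorem integral_det_kernelMatrix_unit {ι : Type*} [Fintype ι] [DecidableEq ι]
    (hK : IsReproducingKernel K N f g S μ) (σ : ι → T) (r : T) {x : ι → X} (hx : ∀ i, x i ∈ S) :
    ∫ w, (kernelMatrix K (Sum.elim σ fun _ : Unit => r) (Sum.elim x fun _ => w)).det ∂μ =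
      (N - #{i | σ i = r}) * (kernelMatrix K σ x).det := by
  set A := kernelMatrix K σ x
  have hdet (w : X) : (kernelMatrix K (Sum.elim σ fun _ : Unit => r) (Sum.elim x fun _ => w)).det =
      A.det * K r w r w - ∑ i, ∑ j, A.adjugate j i * (K (σ i) (x i) r w * K r w (σ j) (x j)) := by
    have hblocks : kernelMatrix K (Sum.elim σ fun _ : Unit => r) (Sum.elim x fun _ => w) =
        fromBlocks A (replicateCol Unit fun i => K (σ i) (x i) r w)
          (replicateRow Unit fun j => K r w (σ j) (x j)) (of fun _ _ => K r w r w) := by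
      ext (i | i) (j | j) <;> rfl
    rw [hblocks, det_fromBlocks_replicate, Finset.sum_comm]
    simp only [dotProduct, mulVec, Finset.mul_sum]
    congr 1
    exact Finset.sum_congr rfl fun i _ => Finset.sum_congr rfl fun j _ => by ring
  have hint (i j : ι) : Integrable
      (fun w => A.adjugate j i * (K (σ i) (x i) r w * K r w (σ j) (x j))) μ :=
    (hK.integrable_comp hK.toIsDominatedKernel _ _ _ (hx i) (hx j)).const_mul _
  simp only [hdet]
  rw [integral_sub ((hK.integrable_diag r).const_mul _)
      (integrable_finsetSum _ fun i _ => integrable_finsetSum _ fun j _ => hint i j),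
    integral_const_mul, hK.integral_diag, integral_finsetSum _ fun i _ =>
      integrable_finsetSum _ fun j _ => hint i j]
  simp only [integral_finsetSum _ fun j _ => hint _ j, integral_const_mul,
    hK.integral_comp _ _ _ _ (hx _) _ (hx _)]
  change _ - ∑ i, ∑ j, A.adjugate j i * ((_ - _) * A i j) = _
  rw [sum_sum_adjugate_mul_sub, card_fiber_eq_sum_sub_sum]
  ring

variable [SigmaFinite μ] {κ : Type*} [Fintype κ] [DecidableEq κ]

theorem integral_det_kernelMatrix_succ (hK : IsReproducingKernel K N f g S μ) (σ : κ → T) {n : ℕ}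
    (ρ : Fin (n + 1) → T) {x : κ → X} (hx : ∀ i, x i ∈ S) :
    ∫ z : Fin (n + 1) → X,
        (kernelMatrix K (Sum.elim σ ρ) (Sum.elim x z)).det ∂(Measure.pi fun _ => μ) =
      (N - #{i | Sum.elim σ (Fin.tail ρ) i = ρ 0}) * ∫ z : Fin n → X,
        (kernelMatrix K (Sum.elim σ (Fin.tail ρ)) (Sum.elim x z)).det ∂(Measure.pi fun _ => μ) := by
  let e : (κ ⊕ Fin n) ⊕ Unit ≃ κ ⊕ Fin (n + 1) := (Equiv.sumAssoc _ _ _).trans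
    ((Equiv.refl κ).sumCongr ((Equiv.optionEquivSumPUnit _).symm.trans (finSuccEquiv n).symm))
  have hcons (w : X) (z : Fin n → X) :
      (kernelMatrix K (Sum.elim σ ρ) (Sum.elim x (Fin.cons w z : Fin (n + 1) → X))).det =
        (kernelMatrix K (Sum.elim (Sum.elim σ (Fin.tail ρ)) fun _ : Unit => ρ 0)
          (Sum.elim (Sum.elim x z) fun _ => w)).det := by
    rw [← det_kernelMatrix_comp_equiv K e]
    congr 2 <;> ext ((i | i) | i) <;> simp [e, Fin.tail]
  have hmp := (measurePreserving_piFinSuccAbove (fun _ : Fin (n + 1) => μ) 0).symm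
  have hint := hmp.integrable_comp_of_integrable (hK.integrable_det_kernelMatrix σ ρ hx)
  have hmem : ∀ᵐ z : Fin n → X ∂(Measure.pi fun _ => μ), ∀ b, z b ∈ S :=
    eventually_all.2 fun b => Measure.tendsto_eval_ae_ae.eventually hK.ae_mem
  rw [← hmp.integral_comp', ← integral_const_mul]
  refine (integral_prod_symm _ hint).trans ?_
  refine integral_congr_ae (hmem.mono fun z hz => ?_)
  have hxz : ∀ i, Sum.elim x z i ∈ S := Sum.rec hx hz
  refine (integral_congr_ae (.of_forall fun w => ?_)).trans
    (hK.integral_det_kernelMatrix_unit (Sum.elim σ (Fin.tail ρ)) (ρ 0) hxz)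
  have hsplit : (MeasurableEquiv.piFinSuccAbove (fun _ : Fin (n + 1) => X) 0).symm (w, z) =
      Fin.cons w z := Fin.insertNth_zero' w z
  simp only [← hcons, Function.comp_apply, hsplit]

theorem integral_det_kernelMatrix_fin [Fintype T] (hK : IsReproducingKernel K N f g S μ)
    (σ : κ → T) {n : ℕ} (ρ : Fin n → T) {x : κ → X} (hx : ∀ i, x i ∈ S) :
    ∫ z : Fin n → X, (kernelMatrix K (Sum.elim σ ρ) (Sum.elim x z)).det ∂(Measure.pi fun _ => μ) =
      (∏ r, (descPochhammer ℝ #{b | ρ b = r}).eval (N - #{i | σ i = r} : ℝ)) *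
        (kernelMatrix K σ x).det := by
  induction n with
  | zero =>
    simp [← det_kernelMatrix_comp_equiv K (Equiv.sumEmpty κ (Fin 0)).symm, Function.comp_def,
      measureReal_def, Measure.pi_empty_univ]
  | succ n ih =>
    have hcount (r : T) : (descPochhammer ℝ #{b | ρ b = r}).eval (N - #{i | σ i = r} : ℝ) =
        (descPochhammer ℝ #{b | Fin.tail ρ b = r}).eval (N - #{i | σ i = r} : ℝ) *
          if ρ 0 = r then N - #{i | Sum.elim σ (Fin.tail ρ) i = r} else 1 := by
      rw [Fin.card_filter_univ_succ]
      split_ifs with h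
      · rw [descPochhammer_succ_eval, card_filter_sumElim, Nat.cast_add, sub_sub]
        rfl
      · rw [mul_one]
        rfl
    simp only [hcount, Finset.prod_mul_distrib, Finset.prod_ite_eq, Finset.mem_univ, if_true]
    rw [hK.integral_det_kernelMatrix_succ σ ρ hx, ih]
    ring

theorem integral_det_kernelMatrix [Fintype T] {β : Type*} [Fintype β] [DecidableEq β]
    (hK : IsReproducingKernel K N f g S μ) (σ : κ → T) (ρ : β → T) {x : κ → X}
    (hx : ∀ i, x i ∈ S) :
    ∫ z : β → X, (kernelMatrix K (Sum.elim σ ρ) (Sum.elim x z)).det ∂(Measure.pi fun _ => μ) =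
      (∏ r, (descPochhammer ℝ #{b | ρ b = r}).eval (N - #{i | σ i = r} : ℝ)) *
        (kernelMatrix K σ x).det := by
  let e := (Fintype.equivFin β).symm
  have hcard (r : T) : #{b | ρ (e b) = r} = #{b | ρ b = r} :=
    Finset.card_equiv e (by simp)
  have hreindex (z : β → X) :
      (kernelMatrix K (Sum.elim σ (ρ ∘ e)) (Sum.elim x (z ∘ e))).det =
        (kernelMatrix K (Sum.elim σ ρ) (Sum.elim x z)).det := by
    rw [← det_kernelMatrix_comp_equiv K ((Equiv.refl κ).sumCongr e)]
    congr 2 <;> ext (i | i) <;> rfl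
  have hmp := measurePreserving_piCongrLeft (fun _ : β => μ) e
  rw [← hmp.integral_comp']
  simp only [← hreindex]
  have hz (z : Fin (Fintype.card β) → X) : MeasurableEquiv.piCongrLeft (fun _ => X) e z ∘ e = z :=
    funext fun b => MeasurableEquiv.piCongrLeft_apply_apply (β := fun _ => X) e z b
  simp only [hz, hK.integral_det_kernelMatrix_fin σ (ρ ∘ e) hx, Function.comp_apply, hcard]

end IsReproducingKernel

end KernelMatrices

section EynardMehta

open Matrix Filter Asymptotics
open scoped Finset

variable {T X ι : Type*} [LinearOrder T]

/-- The finite-rank part `∑ᵢ φᵢ(m, x) ψᵢ(n, y)` of the Eynard–Mehta kernel. -/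
def projectionKernel [Fintype ι] (φ ψ : T → ι → X → ℝ) (m : T) (x : X) (n : T) (y : X) : ℝ :=
  ∑ i, φ m i x * ψ n i y

/-- The transition densities `P m n`, from time `n` to time `m`, as a space-time kernel which is
zero unless time increases strictly. -/
def transitionKernel (P : T → T → X → X → ℝ) (m : T) (x : X) (n : T) (y : X) : ℝ :=
  if n < m then P m n x y else 0

/-- The Eynard–Mehta correlation kernel of the functions `φ`, `ψ` and the transition
densities `P`. -/
def extendedKernel [Fintype ι] (φ ψ : T → ι → X → ℝ) (P : T → T → X → X → ℝ) (m : T) (x : X)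
    (n : T) (y : X) : ℝ :=
  projectionKernel φ ψ m x n y - transitionKernel P m x n y

/-- The product of Karlin–McGregor determinants weighting the configurations `Y m i`, with initial
functions `φ` and final functions `ψ`. -/
def multitimeWeight [Fintype ι] [DecidableEq ι] {M : ℕ} (φ ψ : Fin (M + 1) → ι → X → ℝ)
    (P : Fin (M + 1) → Fin (M + 1) → X → X → ℝ) (Y : Fin (M + 1) → ι → X) : ℝ :=
  (of fun i j => ψ (Fin.last M) i (Y (Fin.last M) j)).det *
    (∏ m : Fin M, (of fun i j => P m.succ m.castSucc (Y m.succ i) (Y m.castSucc j)).det) *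
    (of fun i j => φ 0 j (Y 0 i)).det

theorem det_kernelMatrix_extendedKernel [Fintype ι] [DecidableEq ι] {M : ℕ}
    (φ ψ : Fin (M + 1) → ι → X → ℝ)
    (P : Fin (M + 1) → Fin (M + 1) → X → X → ℝ) (Y : Fin (M + 1) → ι → X) :
    (kernelMatrix (extendedKernel φ ψ P) Prod.fst fun p : Fin (M + 1) × ι => Y p.1 p.2).det =
      multitimeWeight φ ψ P Y := by
  rw [multitimeWeight, ← det_comp_eynardMehtaMatrix (fun m => of fun i j => φ m j (Y m i))
    (fun n => of fun i j => ψ n i (Y n j)) fun m n => of fun i j => P m n (Y m i) (Y n j)]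
  congr 1
  ext ⟨m, i⟩ ⟨n, j⟩
  simp only [kernelMatrix, extendedKernel, projectionKernel, transitionKernel, eynardMehtaMatrix,
    comp_apply, of_apply, Matrix.sub_apply, mul_apply]
  split_ifs <;> rfl

variable [MeasurableSpace X]

/-- Functions `φ`, `ψ` biorthonormal at each time and transported by transition densities `P` that
satisfy the Chapman–Kolmogorov equation, together with bounds `f` for the left variables and `g`
for the right variables. -/
structure IsEynardMehtaSystem [DecidableEq ι] (φ ψ : T → ι → X → ℝ) (P : T → T → X → X → ℝ)
    (f g : T → X → ℝ) (S : Set X) (μ : Measure X) : Prop where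
  ae_mem : ∀ᵐ z ∂μ, z ∈ S
  integrable_dom : ∀ m, Integrable (fun z => f m z * g m z) μ
  measurable_left : ∀ m i, Measurable (φ m i)
  measurable_right : ∀ m i, Measurable (ψ m i)
  measurable_transition : ∀ m n, n < m → Measurable fun z : X × X => P m n z.1 z.2
  isBigO_left : ∀ m i, φ m i =O[𝓟 S] f m
  isBigO_right : ∀ m i, ψ m i =O[𝓟 S] g m
  isBigO_transition : ∀ m n, n < m →
    (fun z : X × X => P m n z.1 z.2) =O[𝓟 (S ×ˢ S)] fun z => f m z.1 * g n z.2
  biorthonormal : ∀ m i j, ∫ z, ψ m i z * φ m j z ∂μ = (1 : Matrix ι ι ℝ) i j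
  integral_transition_mul_left : ∀ m n i, n < m → ∀ x ∈ S, ∫ z, P m n x z * φ n i z ∂μ = φ m i x
  integral_right_mul_transition : ∀ m n i, n < m → ∀ y ∈ S, ∫ z, ψ m i z * P m n z y ∂μ = ψ n i y
  integral_transition_mul_transition : ∀ m r n, r < m → n < r → ∀ x ∈ S, ∀ y ∈ S,
    ∫ z, P m r x z * P r n z y ∂μ = P m n x y

namespace IsEynardMehtaSystem

variable [DecidableEq ι] {φ ψ : T → ι → X → ℝ} {P : T → T → X → X → ℝ} {f g : T → X → ℝ}
  {S : Set X} {μ : Measure X}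

theorem isDominatedKernel_transitionKernel (h : IsEynardMehtaSystem φ ψ P f g S μ) :
    IsDominatedKernel (transitionKernel P) f g S μ where
  ae_mem := h.ae_mem
  integrable_dom := h.integrable_dom
  measurable m n := by
    by_cases hnm : n < m
    · simpa only [transitionKernel, hnm, if_true] using h.measurable_transition m n hnm
    · simp only [transitionKernel, hnm, if_false, measurable_const]
  isBigO m n := by
    by_cases hnm : n < m
    · simpa only [transitionKernel, hnm, if_true] using h.isBigO_transition m n hnm
    · simpa only [transitionKernel, hnm, if_false] using isBigO_zero _ _

theorem integral_transitionKernel_comp_transitionKernel (h : IsEynardMehtaSystem φ ψ P f g S μ)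
    (m r n : T) {x y : X} (hx : x ∈ S) (hy : y ∈ S) :
    ∫ z, transitionKernel P m x r z * transitionKernel P r z n y ∂μ =
      if n < r ∧ r < m then transitionKernel P m x n y else 0 := by
  by_cases hrm : r < m
  · by_cases hnr : n < r
    · simp only [transitionKernel, hrm, hnr, hnr.trans hrm, and_self, if_true,
        h.integral_transition_mul_transition m r n hrm hnr x hx y hy]
    · simp [transitionKernel, hnr]
  · simp [transitionKernel, hrm]

theorem integrable_right_mul_left (h : IsEynardMehtaSystem φ ψ P f g S μ) (m : T) (i j : ι) :
    Integrable (fun z => ψ m i z * φ m j z) μ := by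
  refine integrable_of_isBigO_principal h.ae_mem
    ((h.measurable_right m i).mul (h.measurable_left m j)).aestronglyMeasurable
    ((h.isBigO_right m i).mul (h.isBigO_left m j)) ?_
  simpa only [mul_comm] using h.integrable_dom m

variable [Fintype ι]

theorem isDominatedKernel_projectionKernel (h : IsEynardMehtaSystem φ ψ P f g S μ) :
    IsDominatedKernel (projectionKernel φ ψ) f g S μ where
  ae_mem := h.ae_mem
  integrable_dom := h.integrable_dom
  measurable m n := Finset.measurable_sum _ fun i _ =>
    ((h.measurable_left m i).comp measurable_fst).mul
      ((h.measurable_right n i).comp measurable_snd)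
  isBigO m n := IsBigO.fun_sum fun i _ =>
    ((h.isBigO_left m i).comp_tendsto (k := Prod.fst)
      (tendsto_principal_principal.2 fun _ hz => hz.1)).mul
    ((h.isBigO_right n i).comp_tendsto (k := Prod.snd)
      (tendsto_principal_principal.2 fun _ hz => hz.2))

theorem integral_projectionKernel_diag (h : IsEynardMehtaSystem φ ψ P f g S μ) (r : T) :
    ∫ z, projectionKernel φ ψ r z r z ∂μ = Fintype.card ι := by
  simp only [projectionKernel, mul_comm (φ _ _ _)]
  rw [integral_finsetSum _ fun i _ => h.integrable_right_mul_left r i i]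
  simp [h.biorthonormal]

theorem integral_projectionKernel_comp_projectionKernel (h : IsEynardMehtaSystem φ ψ P f g S μ)
    (m r n : T) (x y : X) :
    ∫ z, projectionKernel φ ψ m x r z * projectionKernel φ ψ r z n y ∂μ =
      projectionKernel φ ψ m x n y := by
  have hexpand (z : X) : projectionKernel φ ψ m x r z * projectionKernel φ ψ r z n y =
      ∑ i, ∑ j, φ m i x * ψ n j y * (ψ r i z * φ r j z) := by
    rw [projectionKernel, projectionKernel, Finset.sum_mul_sum]
    exact Finset.sum_congr rfl fun i _ => Finset.sum_congr rfl fun j _ => by ring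
  have hint (i j : ι) : Integrable (fun z => φ m i x * ψ n j y * (ψ r i z * φ r j z)) μ :=
    (h.integrable_right_mul_left r i j).const_mul _
  simp only [hexpand]
  rw [integral_finsetSum _ fun i _ => integrable_finsetSum _ fun j _ => hint i j]
  simp only [integral_finsetSum _ fun j _ => hint _ j, integral_const_mul, h.biorthonormal,
    one_apply, mul_ite, mul_one, mul_zero, Finset.sum_ite_eq, Finset.mem_univ, if_true]
  rfl

theorem integral_projectionKernel_comp_transitionKernel (h : IsEynardMehtaSystem φ ψ P f g S μ)
    (m r n : T) (x : X) {y : X} (hy : y ∈ S) :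
    ∫ z, projectionKernel φ ψ m x r z * transitionKernel P r z n y ∂μ =
      if n < r then projectionKernel φ ψ m x n y else 0 := by
  split_ifs with hnr
  · have hint (i : ι) : Integrable (fun z => ψ r i z * P r n z y) μ := by
      refine integrable_of_isBigO_principal h.ae_mem ((h.measurable_right r i).mul
        ((h.measurable_transition r n hnr).comp measurable_prodMk_right)).aestronglyMeasurable
        ((h.isBigO_right r i).mul ((h.isBigO_transition r n hnr).comp_tendsto
          (k := fun z => (z, y)) (tendsto_principal_principal.2 fun z hz => ⟨hz, hy⟩))) ?_
      refine ((h.integrable_dom r).mul_const (g n y)).congr (.of_forall fun z => ?_)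
      simp only [Function.comp_apply]
      ring
    simp only [projectionKernel, transitionKernel, hnr, if_true, Finset.sum_mul, mul_assoc]
    rw [integral_finsetSum _ fun i _ => (hint i).const_mul _]
    simp only [integral_const_mul, h.integral_right_mul_transition r n _ hnr y hy]
  · simp only [transitionKernel, hnr, if_false, mul_zero, integral_zero]

theorem integral_transitionKernel_comp_projectionKernel (h : IsEynardMehtaSystem φ ψ P f g S μ)
    (m r n : T) {x : X} (hx : x ∈ S) (y : X) :
    ∫ z, transitionKernel P m x r z * projectionKernel φ ψ r z n y ∂μ =
      if r < m then projectionKernel φ ψ m x n y else 0 := by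
  split_ifs with hrm
  · have hint (i : ι) : Integrable (fun z => P m r x z * φ r i z) μ := by
      refine integrable_of_isBigO_principal h.ae_mem
        (((h.measurable_transition m r hrm).comp measurable_prodMk_left).mul
          (h.measurable_left r i)).aestronglyMeasurable
        (((h.isBigO_transition m r hrm).comp_tendsto (k := fun z => (x, z))
          (tendsto_principal_principal.2 fun z hz => ⟨hx, hz⟩)).mul (h.isBigO_left r i)) ?_
      refine ((h.integrable_dom r).const_mul (f m x)).congr (.of_forall fun z => ?_)
      simp only [Function.comp_apply]
      ring
    simp only [projectionKernel, transitionKernel, hrm, if_true, Finset.mul_sum, ← mul_assoc]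
    rw [integral_finsetSum _ fun i _ => (hint i).mul_const _]
    simp only [integral_mul_const, h.integral_transition_mul_left m r _ hrm x hx]
  · simp only [transitionKernel, hrm, if_false, zero_mul, integral_zero]

theorem isReproducingKernel (h : IsEynardMehtaSystem φ ψ P f g S μ) :
    IsReproducingKernel (extendedKernel φ ψ P) (Fintype.card ι) f g S μ where
  toIsDominatedKernel :=
    h.isDominatedKernel_projectionKernel.sub h.isDominatedKernel_transitionKernel
  integral_diag r := by
    simpa [extendedKernel, transitionKernel] using h.integral_projectionKernel_diag r
  integral_comp m r n x hx y hy := by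
    have hA := h.isDominatedKernel_projectionKernel
    have hB := h.isDominatedKernel_transitionKernel
    simp only [extendedKernel, sub_mul, mul_sub]
    rw [integral_sub, integral_sub, integral_sub,
      h.integral_projectionKernel_comp_projectionKernel,
      h.integral_projectionKernel_comp_transitionKernel _ _ _ _ hy,
      h.integral_transitionKernel_comp_projectionKernel _ _ _ hx,
      h.integral_transitionKernel_comp_transitionKernel _ _ _ hx hy]
    · rcases lt_or_ge r m with hrm | hmr <;> rcases lt_or_ge n r with hnr | hrn
      · simp [hrm.not_ge, hrm, hnr, neg_add_eq_sub]
      · simp [hrm.not_ge, hrm, hrn.not_gt]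
      · simp [hmr, hmr.not_gt, hnr]
      · simp [hmr, hmr.not_gt, hrn.not_gt, transitionKernel, (hmr.trans hrn).not_gt]
    exacts [hA.integrable_comp hB _ _ _ hx hy, hB.integrable_comp hB _ _ _ hx hy,
      hA.integrable_comp hA _ _ _ hx hy, hB.integrable_comp hA _ _ _ hx hy,
      (hA.integrable_comp hA _ _ _ hx hy).sub (hB.integrable_comp hA _ _ _ hx hy),
      (hA.integrable_comp hB _ _ _ hx hy).sub (hB.integrable_comp hB _ _ _ hx hy)]

end IsEynardMehtaSystem

theorem integral_multitimeWeight [Fintype ι] [DecidableEq ι] {M : ℕ} {φ ψ : Fin (M + 1) → ι → X → ℝ}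
    {P : Fin (M + 1) → Fin (M + 1) → X → X → ℝ} {f g : Fin (M + 1) → X → ℝ} {S : Set X}
    {μ : Measure X} [SigmaFinite μ] (h : IsEynardMehtaSystem φ ψ P f g S μ) {α β : Type*}
    [Fintype α] [DecidableEq α] [Fintype β] (e : α ⊕ β ≃ Fin (M + 1) × ι)
    {x : α → X} (hx : ∀ i, x i ∈ S) :
    ∫ z : β → X, multitimeWeight φ ψ P (fun m i => Sum.elim x z (e.symm (m, i)))
        ∂(Measure.pi fun _ => μ) =
      (∏ r, (#{b | (e (.inr b)).1 = r}).factorial : ℝ) *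
        (kernelMatrix (extendedKernel φ ψ P) (fun i => (e (.inl i)).1) x).det := by
  classical
  have hweight (z : β → X) : multitimeWeight φ ψ P (fun m i => Sum.elim x z (e.symm (m, i))) =
      (kernelMatrix (extendedKernel φ ψ P)
        (Sum.elim (fun i => (e (.inl i)).1) fun b => (e (.inr b)).1) (Sum.elim x z)).det := by
    rw [← det_kernelMatrix_extendedKernel, ← det_kernelMatrix_comp_equiv _ e]
    congr 2
    · ext (i | i) <;> rfl
    · ext i
      simp
  have hcard (r : Fin (M + 1)) : (Fintype.card ι : ℝ) - #{i | (e (.inl i)).1 = r} =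
      #{b | (e (.inr b)).1 = r} := by
    have hfiber : #{p : Fin (M + 1) × ι | p.1 = r} = Fintype.card ι := by
      rw [← Finset.card_univ, ← Finset.card_map ⟨fun i : ι => (r, i), Prod.mk_right_injective r⟩]
      congr 1
      ext ⟨m, i⟩
      simp [eq_comm]
    rw [← hfiber, ← Finset.card_equiv (s := {c | (e c).1 = r}) e (by simp), sub_eq_iff_eq_add',
      ← Nat.cast_add, ← card_filter_sumElim]
    congr 3
    ext (i | i) <;> rfl
  simp only [hweight, h.isReproducingKernel.integral_det_kernelMatrix _ _ hx, hcard,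
    descPochhammer_eval_eq_descFactorial, Nat.descFactorial_self]

end EynardMehta

section BesselClifford

open Finset Filter Topology Asymptotics

variable {ν : ℝ}

/-- `Γ(n + 1 + ν)`, the analogue of `n!` in the coefficients of Bessel-type power series. -/
noncomputable def shiftedGamma (ν : ℝ) (n : ℕ) : ℝ := Gamma (n + 1 + ν)

theorem shiftedGamma_pos (hν : -1 < ν) (n : ℕ) : 0 < shiftedGamma ν n :=
  Gamma_pos_of_pos (by linarith [n.cast_nonneg (α := ℝ)])

theorem shiftedGamma_succ (hν : -1 < ν) (n : ℕ) :
    shiftedGamma ν (n + 1) = (n + 1 + ν) * shiftedGamma ν n := by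
  rw [shiftedGamma, shiftedGamma, ← Gamma_add_one (by linarith [n.cast_nonneg (α := ℝ)])]
  congr 1
  push_cast
  ring

theorem exists_factorial_le_mul_shiftedGamma (hν : -1 < ν) {θ : ℝ} (hθ : 1 < θ) :
    ∃ C, ∀ n : ℕ, n.factorial ≤ C * (θ ^ n * shiftedGamma ν n) := by
  have : 0 < θ := zero_lt_one.trans hθ
  have hpos : ∀ n, 0 < n.factorial / (θ ^ n * shiftedGamma ν n) := fun n => by
    have := shiftedGamma_pos hν n
    positivity
  have hratio : ∀ n : ℕ, ((n + 1 : ℕ) : ℝ) / ((n + 1 : ℕ) + ν) * θ⁻¹ =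
      ‖(n + 1).factorial / (θ ^ (n + 1) * shiftedGamma ν (n + 1))‖ /
        ‖n.factorial / (θ ^ n * shiftedGamma ν n)‖ := fun n => by
    have := shiftedGamma_pos hν n
    have : 0 < (n : ℝ) + 1 + ν := by linarith [n.cast_nonneg (α := ℝ)]
    rw [norm_of_nonneg (hpos _).le, norm_of_nonneg (hpos _).le, shiftedGamma_succ hν,
      Nat.factorial_succ]
    push_cast
    field_simp
    ring
  have hsum : Summable fun n : ℕ => n.factorial / (θ ^ n * shiftedGamma ν n) := by
    refine summable_of_ratio_test_tendsto_lt_one (inv_lt_one_of_one_lt₀ hθ)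
      (.of_forall fun n => (hpos n).ne') (Tendsto.congr hratio ?_)
    simpa using ((tendsto_add_atTop_iff_nat 1).2
      (tendsto_natCast_div_add_atTop ν)).mul_const θ⁻¹
  refine ⟨∑' n : ℕ, n.factorial / (θ ^ n * shiftedGamma ν n), fun n => ?_⟩
  have := shiftedGamma_pos hν n
  rw [← div_le_iff₀ (by positivity)]
  exact hsum.le_tsum n fun k _ => (hpos k).le

/-- The Bessel–Clifford function `∑ₙ wⁿ / (n! Γ(n + 1 + ν))`, the entire function through which
both `J_ν` and `I_ν` factor. -/
noncomputable def besselClifford (ν w : ℝ) : ℝ :=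
  ∑' n : ℕ, w ^ n / (n.factorial * shiftedGamma ν n)

theorem norm_besselClifford_term (hν : -1 < ν) (w : ℝ) (n : ℕ) :
    ‖w ^ n / (n.factorial * shiftedGamma ν n)‖ = |w| ^ n / (n.factorial * shiftedGamma ν n) := by
  have := shiftedGamma_pos hν n
  rw [norm_div, norm_pow, norm_eq_abs w, norm_of_nonneg (by positivity)]

theorem hasSum_pow_div_factorial (w : ℝ) : HasSum (fun n : ℕ => w ^ n / n.factorial) (exp w) := by
  rw [exp_eq_exp_ℝ]
  exact NormedSpace.expSeries_div_hasSum_exp w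

theorem besselClifford_term_le {θ C : ℝ} (hν : -1 < ν)
    (hC : ∀ n : ℕ, n.factorial ≤ C * (θ ^ n * shiftedGamma ν n)) {u v : ℝ} (hu : 0 ≤ u)
    (hv : 0 ≤ v) (n : ℕ) :
    (u * v) ^ n / (n.factorial * shiftedGamma ν n) ≤ C * exp u * ((θ * v) ^ n / n.factorial) := by
  have hG := shiftedGamma_pos hν n
  calc (u * v) ^ n / (n.factorial * shiftedGamma ν n)
      = u ^ n / n.factorial * (v ^ n / n.factorial) * (n.factorial / shiftedGamma ν n) := by
        rw [mul_pow]
        field_simp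
    _ ≤ exp u * (v ^ n / n.factorial) * (C * θ ^ n) := by
        gcongr
        · exact pow_div_factorial_le_exp u hu n
        · rw [div_le_iff₀ hG, mul_assoc]
          exact hC n
    _ = C * exp u * ((θ * v) ^ n / n.factorial) := by ring

theorem summable_norm_besselClifford (hν : -1 < ν) (w : ℝ) :
    Summable fun n : ℕ => ‖w ^ n / (n.factorial * shiftedGamma ν n)‖ := by
  obtain ⟨C, hC⟩ := exists_factorial_le_mul_shiftedGamma hν one_lt_two
  refine .of_nonneg_of_le (fun n => norm_nonneg _) (fun n => ?_)
    ((summable_pow_div_factorial (2 * |w|)).mul_left (C * exp 1))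
  rw [norm_besselClifford_term hν]
  simpa only [one_mul] using
    besselClifford_term_le hν hC zero_le_one (abs_nonneg w) n

theorem hasSum_besselClifford (hν : -1 < ν) (w : ℝ) :
    HasSum (fun n : ℕ => w ^ n / (n.factorial * shiftedGamma ν n)) (besselClifford ν w) :=
  (summable_norm_besselClifford hν w).of_norm.hasSum

theorem measurable_besselClifford (hν : -1 < ν) : Measurable (besselClifford ν) := by
  refine measurable_of_tendsto_metrizable
    (f := fun k w => ∑ n ∈ range k, w ^ n / (n.factorial * shiftedGamma ν n))
    (fun k => by fun_prop) ?_
  exact tendsto_pi_nhds.2 fun w => (hasSum_besselClifford hν w).tendsto_sum_nat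

theorem besselClifford_nonneg (hν : -1 < ν) {w : ℝ} (hw : 0 ≤ w) : 0 ≤ besselClifford ν w :=
  tsum_nonneg fun n => by
    have := shiftedGamma_pos hν n
    positivity

theorem abs_besselClifford_le (hν : -1 < ν) (w : ℝ) :
    |besselClifford ν w| ≤ besselClifford ν |w| :=
  (norm_tsum_le_tsum_norm (summable_norm_besselClifford hν w)).trans_eq
    (tsum_congr (norm_besselClifford_term hν w))

theorem exists_besselClifford_mul_le (hν : -1 < ν) {θ : ℝ} (hθ : 1 < θ) :
    ∃ C, ∀ u v : ℝ, 0 ≤ u → 0 ≤ v →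
      besselClifford ν (u * v) ≤ C * (exp u * exp (θ * v)) := by
  obtain ⟨C, hC⟩ := exists_factorial_le_mul_shiftedGamma hν hθ
  refine ⟨C, fun u v hu hv => ?_⟩
  rw [← mul_assoc]
  exact hasSum_le (besselClifford_term_le hν hC hu hv)
    (hasSum_besselClifford hν _) ((hasSum_pow_div_factorial _).mul_left _)

end BesselClifford

section BesqFlow

open Finset Polynomial

variable {R : Type*} [CommSemiring R]

/-- The linear map `∑ aₙ Xⁿ ↦ ∑ cₙ aₙ Xⁿ`, used to conjugate the Taylor shift. -/
noncomputable def scaleCoeff (c : ℕ → R) : R[X] →ₗ[R] R[X] := lsum fun n => c n • monomial n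

theorem scaleCoeff_monomial (c : ℕ → R) (n : ℕ) (r : R) :
    scaleCoeff c (monomial n r) = c n • monomial n r := by
  simp [scaleCoeff, lsum]

theorem scaleCoeff_scaleCoeff (c d : ℕ → R) (p : R[X]) :
    scaleCoeff c (scaleCoeff d p) = scaleCoeff (c * d) p := by
  induction p using Polynomial.induction_on' with
  | add p q hp hq => simp only [map_add, hp, hq]
  | monomial n r => simp only [scaleCoeff_monomial, map_smul, smul_smul, Pi.mul_apply, mul_comm]

theorem scaleCoeff_one (p : R[X]) : scaleCoeff 1 p = p := by
  induction p using Polynomial.induction_on' with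
  | add p q hp hq => simp only [map_add, hp, hq]
  | monomial n r => simp only [scaleCoeff_monomial, Pi.one_apply, one_smul]

theorem coeff_scaleCoeff (c : ℕ → R) (p : R[X]) (n : ℕ) :
    (scaleCoeff c p).coeff n = c n * p.coeff n := by
  induction p using Polynomial.induction_on' with
  | add p q hp hq => simp only [map_add, coeff_add, hp, hq, mul_add]
  | monomial k r =>
    rw [scaleCoeff_monomial, coeff_smul, coeff_monomial]
    split_ifs with h
    · rw [h, smul_eq_mul]
    · rw [smul_zero, mul_zero]

variable {ν : ℝ}

/-- The action of the squared Bessel process on polynomials: the semigroup with generator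
`2 (x ∂² + (ν + 1) ∂)` at time `τ` is `besqFlow ν (2 * τ)`. Rescaling `Xⁿ` by `Γ(n + 1 + ν)` turns
it into the Taylor shift, which makes sense for shifts of either sign. -/
noncomputable def besqFlow (ν c : ℝ) : ℝ[X] →ₗ[ℝ] ℝ[X] :=
  scaleCoeff (shiftedGamma ν)⁻¹ ∘ₗ taylor c ∘ₗ scaleCoeff (shiftedGamma ν)

theorem besqFlow_apply (ν c : ℝ) (p : ℝ[X]) :
    besqFlow ν c p = scaleCoeff (shiftedGamma ν)⁻¹ (taylor c (scaleCoeff (shiftedGamma ν) p)) :=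
  rfl

theorem besqFlow_zero (hν : -1 < ν) (p : ℝ[X]) : besqFlow ν 0 p = p := by
  have hG : (shiftedGamma ν)⁻¹ * shiftedGamma ν = 1 :=
    funext fun n => inv_mul_cancel₀ (shiftedGamma_pos hν n).ne'
  rw [besqFlow_apply, taylor_zero, scaleCoeff_scaleCoeff, hG, scaleCoeff_one]

theorem besqFlow_besqFlow (hν : -1 < ν) (c d : ℝ) (p : ℝ[X]) :
    besqFlow ν c (besqFlow ν d p) = besqFlow ν (c + d) p := by
  have hG : shiftedGamma ν * (shiftedGamma ν)⁻¹ = 1 :=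
    funext fun n => mul_inv_cancel₀ (shiftedGamma_pos hν n).ne'
  simp only [besqFlow_apply]
  rw [scaleCoeff_scaleCoeff, hG, scaleCoeff_one, taylor_taylor]

theorem coeff_besqFlow_X_pow (ν c : ℝ) (n j : ℕ) :
    (besqFlow ν c (X ^ n)).coeff j =
      (shiftedGamma ν j)⁻¹ * shiftedGamma ν n * (c ^ (n - j) * n.choose j) := by
  rw [besqFlow_apply, coeff_scaleCoeff, X_pow_eq_monomial, scaleCoeff_monomial,
    ← X_pow_eq_monomial, map_smul, taylor_X_pow, coeff_smul, coeff_X_add_C_pow, smul_eq_mul,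
    Pi.inv_apply, mul_assoc]

theorem natDegree_besqFlow_X_pow_le (ν c : ℝ) (n : ℕ) :
    (besqFlow ν c (X ^ n)).natDegree ≤ n := by
  refine natDegree_le_iff_coeff_eq_zero.2 fun j hj => ?_
  rw [coeff_besqFlow_X_pow, Nat.choose_eq_zero_of_lt hj, Nat.cast_zero, mul_zero, mul_zero]

theorem coeff_besqFlow_X_pow_self (hν : -1 < ν) (c : ℝ) (n : ℕ) :
    (besqFlow ν c (X ^ n)).coeff n = 1 := by
  rw [coeff_besqFlow_X_pow, inv_mul_cancel₀ (shiftedGamma_pos hν n).ne']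
  simp

theorem eval_besqFlow_X_pow (ν c y : ℝ) (n : ℕ) :
    (besqFlow ν c (X ^ n)).eval y = n.factorial * shiftedGamma ν n *
      ∑ p ∈ antidiagonal n,
        c ^ p.1 / p.1.factorial * (y ^ p.2 / (p.2.factorial * shiftedGamma ν p.2)) := by
  rw [eval_eq_sum_range' (Nat.lt_succ_of_le (natDegree_besqFlow_X_pow_le ν c n)),
    ← Nat.sum_antidiagonal_swap, Nat.sum_antidiagonal_eq_sum_range_succ_mk, mul_sum]
  refine sum_congr rfl fun j hj => ?_
  rw [coeff_besqFlow_X_pow, Nat.cast_choose ℝ (Nat.lt_succ_iff.1 (mem_range.1 hj)),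
    Prod.fst_swap, Prod.snd_swap]
  field_simp

theorem eval_ascPochhammer_mul_shiftedGamma (hν : -1 < ν) (i j : ℕ) :
    (ascPochhammer ℝ i).eval (j + 1 + ν) * shiftedGamma ν j = shiftedGamma ν (i + j) := by
  induction i with
  | zero => simp
  | succ i ih =>
    rw [ascPochhammer_succ_eval, mul_right_comm, ih, Nat.add_right_comm, shiftedGamma_succ hν]
    push_cast
    ring

theorem ring_choose_add_eq_shiftedGamma_div (hν : -1 < ν) (i j : ℕ) :
    Ring.choose (((i + j : ℕ) : ℝ) + ν) i =
      shiftedGamma ν (i + j) / (i.factorial * shiftedGamma ν j) := by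
  have hG := (shiftedGamma_pos hν j).ne'
  rw [Ring.choose_eq_smul, descPochhammer_smeval_eq_ascPochhammer, ascPochhammer_smeval_eq_eval,
    ← eval_ascPochhammer_mul_shiftedGamma hν i j]
  have : ((i + j : ℕ) : ℝ) + ν - i + 1 = j + 1 + ν := by
    push_cast
    ring
  rw [this, smul_eq_mul]
  field_simp

/-- The Chu–Vandermonde identity for `(k + n + ν choose n)`. -/
theorem shiftedGamma_add_eq_sum (hν : -1 < ν) (n k : ℕ) :
    shiftedGamma ν (n + k) = n.factorial * shiftedGamma ν k * ∑ p ∈ antidiagonal n,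
      shiftedGamma ν n / (p.1.factorial * shiftedGamma ν p.2) * k.choose p.2 := by
  have hG := (shiftedGamma_pos hν k).ne'
  have hvandermonde := Ring.add_choose_eq n (Commute.all ((n : ℝ) + ν) (k : ℝ))
  rw [add_right_comm, ← Nat.cast_add, ring_choose_add_eq_shiftedGamma_div hν,
    div_eq_iff (by positivity), mul_comm] at hvandermonde
  rw [hvandermonde]
  congr 1
  refine sum_congr rfl fun p hp => ?_
  rw [Ring.choose_natCast, ← mem_antidiagonal.1 hp, ring_choose_add_eq_shiftedGamma_div hν]

theorem hasSum_pow_mul_choose_div_factorial (w : ℝ) (j : ℕ) :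
    HasSum (fun k : ℕ => w ^ k * k.choose j / k.factorial) (w ^ j / j.factorial * exp w) := by
  refine (Function.Injective.hasSum_iff (add_left_injective j) fun k hk => ?_).1 ?_
  · have hkj : k < j := not_le.1 fun h => hk ⟨k - j, Nat.sub_add_cancel h⟩
    rw [Nat.choose_eq_zero_of_lt hkj, Nat.cast_zero, mul_zero, zero_div]
  · refine ((hasSum_pow_div_factorial w).mul_left (w ^ j / j.factorial)).congr_fun fun k => ?_
    rw [Function.comp_apply, Nat.cast_choose ℝ (Nat.le_add_left j k), Nat.add_sub_cancel, pow_add]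
    field_simp

theorem hasSum_shiftedGamma_add (hν : -1 < ν) (s α : ℝ) (n : ℕ) :
    HasSum (fun k : ℕ => α ^ k / (k.factorial * shiftedGamma ν k) *
        (s ^ (n + k) * shiftedGamma ν (n + k)))
      (exp (α * s) * (besqFlow ν s (X ^ n)).eval (α * s ^ 2)) := by
  have hterm := hasSum_sum fun p (_ : p ∈ antidiagonal n) =>
    (hasSum_pow_mul_choose_div_factorial (α * s) p.2).mul_left
      (n.factorial * shiftedGamma ν n * (s ^ n / (p.1.factorial * shiftedGamma ν p.2)))
  have hflow : exp (α * s) * (besqFlow ν s (X ^ n)).eval (α * s ^ 2) = ∑ p ∈ antidiagonal n,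
      n.factorial * shiftedGamma ν n * (s ^ n / (p.1.factorial * shiftedGamma ν p.2)) *
        ((α * s) ^ p.2 / p.2.factorial * exp (α * s)) := by
    rw [eval_besqFlow_X_pow, mul_sum, mul_sum]
    refine sum_congr rfl fun p hp => ?_
    rw [← mem_antidiagonal.1 hp, pow_add s, sq, ← mul_assoc α s s, mul_pow (α * s)]
    field_simp
  rw [hflow]
  refine hterm.congr_fun fun k => ?_
  have hG := (shiftedGamma_pos hν k).ne'
  rw [shiftedGamma_add_eq_sum hν, mul_sum, mul_sum, mul_sum]
  refine sum_congr rfl fun p _ => ?_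
  rw [pow_add, mul_pow]
  field_simp

theorem hasSum_eval_besqFlow (hν : -1 < ν) (c y β : ℝ) :
    HasSum (fun n : ℕ => β ^ n / (n.factorial * shiftedGamma ν n) *
      (besqFlow ν c (X ^ n)).eval y) (exp (β * c) * besselClifford ν (β * y)) := by
  have hexp := (hasSum_pow_div_factorial (β * c)).summable.norm
  have hclifford := summable_norm_besselClifford hν (β * y)
  have hcauchy :=
    (summable_norm_sum_mul_antidiagonal_of_summable_norm hexp hclifford).of_norm.hasSum
  rw [← tsum_mul_tsum_eq_tsum_sum_antidiagonal_of_summable_norm hexp hclifford,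
    (hasSum_pow_div_factorial _).tsum_eq] at hcauchy
  refine hcauchy.congr_fun fun n => ?_
  have hG := (shiftedGamma_pos hν n).ne'
  rw [eval_besqFlow_X_pow, mul_sum, mul_sum]
  refine sum_congr rfl fun p hp => ?_
  rw [← mem_antidiagonal.1 hp] at hG ⊢
  rw [pow_add, mul_pow, mul_pow]
  field_simp

theorem det_eval_besqFlow_X_pow (hν : -1 < ν) (c : ℝ) {n : ℕ} (x : Fin n → ℝ) :
    (Matrix.of fun i j : Fin n => (besqFlow ν c (X ^ (i : ℕ))).eval (x j)).det =
      (Matrix.vandermonde x).det := by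
  have hdeg : ∀ i : ℕ, (besqFlow ν c (X ^ i)).natDegree = i := fun i =>
    natDegree_eq_of_le_of_coeff_ne_zero (natDegree_besqFlow_X_pow_le ν c i)
      (by rw [coeff_besqFlow_X_pow_self hν]; exact one_ne_zero)
  rw [Matrix.det_eval_matrixOfPolynomials_eq_det_vandermonde x
    (fun i => besqFlow ν c (X ^ (i : ℕ))) (fun i => hdeg i) fun i =>
      monic_of_natDegree_le_of_coeff_eq_one _ (natDegree_besqFlow_X_pow_le ν c i)
        (coeff_besqFlow_X_pow_self hν c i), ← Matrix.det_transpose]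
  rfl

theorem sum_eval_smul_lagrange_basis {F ι : Type*} [Field F] [DecidableEq ι] {s : Finset ι}
    {v : ι → F} (hv : Set.InjOn v s) {p : F[X]} (hp : p.degree < #s) :
    ∑ i ∈ s, p.eval (v i) • Lagrange.basis s v i = p := by
  conv_rhs => rw [Lagrange.eq_interpolate hv hp, Lagrange.interpolate_apply]
  exact sum_congr rfl fun i _ => smul_eq_C_mul _

theorem det_vandermonde_mul_det_eval_besqFlow_lagrange (hν : -1 < ν) (c : ℝ) {N : ℕ}
    {a : Fin N → ℝ} (ha : Function.Injective a) (x : Fin N → ℝ) :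
    (Matrix.vandermonde a).det *
        (Matrix.of fun i j => (besqFlow ν c (Lagrange.basis univ a i)).eval (x j)).det =
      (Matrix.vandermonde x).det := by
  rw [← det_eval_besqFlow_X_pow hν c x, ← Matrix.det_transpose (Matrix.vandermonde a),
    ← Matrix.det_mul]
  congr 1
  ext k j
  have hX : ((X : ℝ[X]) ^ (k : ℕ)).degree < #(univ : Finset (Fin N)) := by
    rw [degree_X_pow, card_univ, Fintype.card_fin]
    exact_mod_cast k.isLt
  rw [Matrix.of_apply, ← sum_eval_smul_lagrange_basis ha.injOn hX, map_sum, eval_finsetSum]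
  simp only [Matrix.mul_apply, Matrix.transpose_apply, Matrix.vandermonde_apply, Matrix.of_apply,
    map_smul, eval_smul, smul_eq_mul, eval_pow, eval_X]

theorem eval_lagrange_basis {F ι : Type*} [Field F] [DecidableEq ι] (s : Finset ι) (v : ι → F)
    (i : ι) (x : F) :
    (Lagrange.basis s v i).eval x = ∏ j ∈ s.erase i, (v j - x) / (v j - v i) := by
  rw [Lagrange.basis, eval_prod]
  refine prod_congr rfl fun j _ => ?_
  rw [Lagrange.basisDivisor, eval_mul, eval_C, eval_sub, eval_X, eval_C, inv_mul_eq_div,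
    ← neg_sub x, ← neg_sub (v i), neg_div_neg_eq]

theorem eval_lagrange_basis_eq_one_apply {F ι : Type*} [Field F] [Fintype ι] [DecidableEq ι]
    {v : ι → F} (hv : Function.Injective v) (i j : ι) :
    (Lagrange.basis univ v i).eval (v j) = (1 : Matrix ι ι F) i j := by
  rcases eq_or_ne i j with rfl | hij
  · rw [Lagrange.eval_basis_self hv.injOn (mem_univ i), Matrix.one_apply_eq]
  · rw [Lagrange.eval_basis_of_ne hij (mem_univ j), Matrix.one_apply_ne hij]

end BesqFlow

section BesselMoments

open Finset Polynomial

variable {ν s : ℝ}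

theorem integrableOn_pow_mul_rpow_mul_exp (hν : -1 < ν) (hs : 0 < s) (n : ℕ) :
    IntegrableOn (fun z : ℝ => z ^ n * (z ^ ν * exp (-(z / s)))) (Set.Ioi 0) := by
  refine (integrableOn_rpow_mul_exp_neg_mul_rpow (s := n + ν)
    (by linarith [n.cast_nonneg (α := ℝ)]) one_pos (inv_pos.2 hs)).congr_fun
    (fun z hz => ?_) measurableSet_Ioi
  simp only [rpow_one]
  rw [rpow_add hz, rpow_natCast, neg_mul, inv_mul_eq_div, mul_assoc]

theorem integral_pow_mul_rpow_mul_exp (hν : -1 < ν) (hs : 0 < s) (n : ℕ) :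
    ∫ z in Set.Ioi (0 : ℝ), z ^ n * (z ^ ν * exp (-(z / s))) =
      s ^ (ν + 1) * (s ^ n * shiftedGamma ν n) := by
  have hgamma := integral_rpow_mul_exp_neg_mul_Ioi (a := n + 1 + ν)
    (by linarith [n.cast_nonneg (α := ℝ)]) (inv_pos.2 hs)
  have hpow : s ^ ((n : ℝ) + 1 + ν) = s ^ (ν + 1) * s ^ n := by
    rw [← rpow_natCast s n, ← rpow_add hs]
    congr 1
    ring
  rw [one_div, inv_inv, hpow, mul_assoc] at hgamma
  rw [shiftedGamma, ← hgamma]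
  refine setIntegral_congr_fun measurableSet_Ioi fun z hz => ?_
  rw [show (n : ℝ) + 1 + ν - 1 = n + ν by ring, rpow_add hz, rpow_natCast, inv_mul_eq_div,
    mul_assoc]

theorem integral_pow_mul_besselClifford (hν : -1 < ν) (hs : 0 < s) (α : ℝ) (n : ℕ) :
    ∫ z in Set.Ioi (0 : ℝ), z ^ n * (z ^ ν * exp (-(z / s)) * besselClifford ν (α * z)) =
      s ^ (ν + 1) * exp (α * s) * (besqFlow ν s (X ^ n)).eval (α * s ^ 2) := by
  set F : ℕ → ℝ → ℝ := fun k z =>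
    α ^ k / (k.factorial * shiftedGamma ν k) * (z ^ (n + k) * (z ^ ν * exp (-(z / s)))) with hF
  have hint : ∀ k, IntegrableOn (F k) (Set.Ioi 0) := fun k =>
    (integrableOn_pow_mul_rpow_mul_exp hν hs (n + k)).const_mul _
  have hnorm : ∀ k, ∫ z in Set.Ioi (0 : ℝ), ‖F k z‖ = s ^ (ν + 1) *
      (|α| ^ k / (k.factorial * shiftedGamma ν k) * (s ^ (n + k) * shiftedGamma ν (n + k))) := by
    intro k
    rw [mul_left_comm, ← integral_pow_mul_rpow_mul_exp hν hs, ← integral_const_mul]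
    refine setIntegral_congr_fun measurableSet_Ioi fun z (hz : 0 < z) => ?_
    simp only [hF]
    rw [norm_mul, norm_besselClifford_term hν, norm_of_nonneg (by positivity)]
  have hsum := hasSum_integral_of_summable_integral_norm hint <| by
    simp only [hnorm]
    exact (hasSum_shiftedGamma_add hν s |α| n).summable.mul_left _
  have htsum : ∀ z, ∑' k, F k z =
      z ^ n * (z ^ ν * exp (-(z / s)) * besselClifford ν (α * z)) := fun z => by
    rw [besselClifford, ← mul_assoc, ← tsum_mul_left]
    refine tsum_congr fun k => ?_
    simp only [hF]
    rw [pow_add, mul_pow]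
    ring
  simp only [htsum] at hsum
  simp only [hF, integral_const_mul, integral_pow_mul_rpow_mul_exp hν hs,
    mul_left_comm _ (s ^ (ν + 1))] at hsum
  rw [mul_assoc, ← hsum.unique ((hasSum_shiftedGamma_add hν s α n).mul_left _)]

theorem integrableOn_pow_mul_besselClifford (hν : -1 < ν) (hs : 0 < s) (α : ℝ) (n : ℕ) :
    IntegrableOn (fun z : ℝ => z ^ n * (z ^ ν * exp (-(z / s)) * besselClifford ν (α * z)))
      (Set.Ioi 0) := by
  obtain ⟨C, hC⟩ := exists_besselClifford_mul_le hν one_lt_two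
  have hmeas := measurable_besselClifford hν
  refine Integrable.mono' ((integrableOn_pow_mul_rpow_mul_exp hν (mul_pos two_pos hs) n).const_mul
    (C * exp (4 * s * |α|))) (by fun_prop) ?_
  filter_upwards [ae_restrict_mem measurableSet_Ioi] with z (hz : 0 < z)
  have hF := calc |besselClifford ν (α * z)|
      ≤ besselClifford ν |α * z| := abs_besselClifford_le hν _
    _ = besselClifford ν (4 * s * |α| * (z / (4 * s))) := by
        rw [abs_mul, abs_of_pos hz]
        congr 1
        field_simp
    _ ≤ C * (exp (4 * s * |α|) * exp (2 * (z / (4 * s)))) := hC _ _ (by positivity) (by positivity)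
  have hexp : exp (-(z / s)) * exp (2 * (z / (4 * s))) = exp (-(z / (2 * s))) := by
    rw [← exp_add]
    congr 1
    field_simp
    ring
  rw [norm_mul, norm_mul, norm_of_nonneg (by positivity), norm_of_nonneg (by positivity),
    norm_eq_abs]
  calc z ^ n * (z ^ ν * exp (-(z / s)) * |besselClifford ν (α * z)|)
      ≤ z ^ n * (z ^ ν * exp (-(z / s)) * (C * (exp (4 * s * |α|) * exp (2 * (z / (4 * s)))))) := by
        gcongr
    _ = C * exp (4 * s * |α|) * (z ^ n * (z ^ ν * (exp (-(z / s)) * exp (2 * (z / (4 * s)))))) := by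
        ring
    _ = C * exp (4 * s * |α|) * (z ^ n * (z ^ ν * exp (-(z / (2 * s))))) := by rw [hexp]

theorem integrableOn_eval_mul_besselClifford (hν : -1 < ν) (hs : 0 < s) (α : ℝ) (p : ℝ[X]) :
    IntegrableOn (fun z : ℝ => p.eval z * (z ^ ν * exp (-(z / s)) * besselClifford ν (α * z)))
      (Set.Ioi 0) := by
  induction p using Polynomial.induction_on' with
  | add p q hp hq =>
    simp only [eval_add, add_mul]
    exact Integrable.add hp hq
  | monomial n r =>
    simp only [eval_monomial, mul_assoc r]
    exact Integrable.const_mul (integrableOn_pow_mul_besselClifford hν hs α n) r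

theorem integral_eval_mul_besselClifford (hν : -1 < ν) (hs : 0 < s) (α : ℝ) (p : ℝ[X]) :
    ∫ z in Set.Ioi (0 : ℝ), p.eval z * (z ^ ν * exp (-(z / s)) * besselClifford ν (α * z)) =
      s ^ (ν + 1) * exp (α * s) * (besqFlow ν s p).eval (α * s ^ 2) := by
  induction p using Polynomial.induction_on' with
  | add p q hp hq =>
    simp only [eval_add, add_mul, map_add, mul_add, ← hp, ← hq]
    exact integral_add (integrableOn_eval_mul_besselClifford hν hs α p)
      (integrableOn_eval_mul_besselClifford hν hs α q)
  | monomial n r =>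
    rw [← C_mul_X_pow_eq_monomial, ← smul_eq_C_mul, map_smul, eval_smul, smul_eq_mul,
      mul_left_comm, ← integral_pow_mul_besselClifford hν hs, ← integral_const_mul]
    simp only [eval_smul, eval_pow, eval_X, smul_eq_mul, mul_assoc]

/-- Weber's second exponential integral, obtained by expanding one factor and summing the moments
of the other. -/
theorem integral_besselClifford_mul_besselClifford (hν : -1 < ν) (hs : 0 < s) {α β : ℝ}
    (hα : 0 ≤ α) (hβ : 0 ≤ β) :
    ∫ z in Set.Ioi (0 : ℝ), z ^ ν * exp (-(z / s)) * besselClifford ν (α * z) *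
        besselClifford ν (β * z) =
      s ^ (ν + 1) * exp ((α + β) * s) * besselClifford ν (α * β * s ^ 2) := by
  set F : ℕ → ℝ → ℝ := fun n z => β ^ n / (n.factorial * shiftedGamma ν n) *
    (z ^ n * (z ^ ν * exp (-(z / s)) * besselClifford ν (α * z))) with hF
  have hint : ∀ n, ∫ z in Set.Ioi (0 : ℝ), F n z = s ^ (ν + 1) * exp (α * s) *
      (β ^ n / (n.factorial * shiftedGamma ν n) *
        (besqFlow ν s (X ^ n)).eval (α * s ^ 2)) := fun n => by
    simp only [hF]
    rw [integral_const_mul, integral_pow_mul_besselClifford hν hs, mul_left_comm]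
  have hnorm : ∀ n, ∫ z in Set.Ioi (0 : ℝ), ‖F n z‖ = ∫ z in Set.Ioi (0 : ℝ), F n z := fun n =>
    setIntegral_congr_fun measurableSet_Ioi fun z (hz : 0 < z) => norm_of_nonneg <| by
      have := shiftedGamma_pos hν n
      have := besselClifford_nonneg hν (mul_nonneg hα hz.le)
      positivity
  have hflow := (hasSum_eval_besqFlow hν s (α * s ^ 2) β).mul_left (s ^ (ν + 1) * exp (α * s))
  have hsum := hasSum_integral_of_summable_integral_norm (F := F)
    (fun n => (integrableOn_pow_mul_besselClifford hν hs α n).const_mul _) <| by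
      simp only [hnorm, hint]
      exact hflow.summable
  have htsum : ∀ z, ∑' n, F n z = z ^ ν * exp (-(z / s)) * besselClifford ν (α * z) *
      besselClifford ν (β * z) := fun z => by
    rw [besselClifford.eq_def ν (β * z), ← tsum_mul_left]
    refine tsum_congr fun n => ?_
    simp only [hF]
    rw [mul_pow]
    ring
  simp only [hint, htsum] at hsum
  rw [hsum.unique hflow, add_mul, exp_add, mul_left_comm β, ← mul_assoc α]
  ring

end BesselMoments

section BesqDensity

open Finset Polynomial Filter Asymptotics

variable {ν τ : ℝ}

/-- The transition density `p^{(ν)}(τ, x | y)`, written through the Bessel–Clifford function. -/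
noncomputable def besqDensity (ν τ x y : ℝ) : ℝ :=
  (2 * τ)⁻¹ ^ (ν + 1) * x ^ ν * exp (-((x + y) / (2 * τ))) * besselClifford ν (x * y / (4 * τ ^ 2))

theorem besselI_eq_rpow_mul_besselClifford (ν : ℝ) {z : ℝ} (hz : 0 < z) :
    besselI ν z = (z / 2) ^ ν * besselClifford ν ((z / 2) ^ 2) := by
  rw [besselI, besselClifford, ← tsum_mul_left]
  refine tsum_congr fun n => ?_
  rw [rpow_add (by positivity), Gamma_nat_eq_factorial, ← pow_mul, shiftedGamma,
    ← rpow_natCast (z / 2) (2 * n)]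
  push_cast
  ring

theorem besselJ_eq_rpow_mul_besselClifford (ν : ℝ) {z : ℝ} (hz : 0 < z) :
    besselJ ν z = (z / 2) ^ ν * besselClifford ν (-(z / 2) ^ 2) := by
  rw [besselJ, besselClifford, ← tsum_mul_left]
  refine tsum_congr fun n => ?_
  rw [rpow_add (by positivity), Gamma_nat_eq_factorial, neg_pow ((z / 2) ^ 2), ← pow_mul,
    shiftedGamma, ← rpow_natCast (z / 2) (2 * n)]
  push_cast
  ring

theorem besq_prefactor_mul_rpow (ν : ℝ) {x y : ℝ} (hτ : 0 < τ) (hx : 0 < x) (hy : 0 < y) :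
    1 / (2 * τ) * (x / y) ^ (ν / 2) * (√(x * y) / τ / 2) ^ ν = (2 * τ)⁻¹ ^ (ν + 1) * x ^ ν := by
  have hsqrt : √(x / y) * (√(x * y) / τ / 2) = x * (2 * τ)⁻¹ := by
    rw [← mul_div_assoc, ← mul_div_assoc, ← sqrt_mul (by positivity),
      show x / y * (x * y) = x * x by field_simp, sqrt_mul_self hx.le]
    field_simp
  rw [rpow_div_two_eq_sqrt ν (by positivity), mul_assoc,
    ← mul_rpow (by positivity) (by positivity), hsqrt, mul_rpow hx.le (by positivity),
    rpow_add_one (by positivity)]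
  ring

theorem sq_sqrt_mul_div_div {x y : ℝ} (hx : 0 < x) (hy : 0 < y) (τ : ℝ) :
    (√(x * y) / τ / 2) ^ 2 = x * y / (4 * τ ^ 2) := by
  rw [div_pow, div_pow, sq_sqrt (by positivity)]
  ring

theorem besqP_eq_besqDensity (ν : ℝ) {x y : ℝ} (hτ : 0 < τ) (hx : 0 < x) (hy : 0 < y) :
    besqP ν τ x y = besqDensity ν τ x y := by
  have : 0 < √(x * y) := sqrt_pos.2 (by positivity)
  rw [besqP, besqDensity, mul_comm y x, besselI_eq_rpow_mul_besselClifford ν (by positivity),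
    ← besq_prefactor_mul_rpow ν hτ hx hy, sq_sqrt_mul_div_div hx hy, neg_div, add_comm y x]
  ring

theorem besqQ_eq_besselClifford (ν : ℝ) {v y : ℝ} (hτ : 0 < τ) (hv : 0 < v) (hy : 0 < y) :
    besqQ ν τ v y = (2 * τ)⁻¹ ^ (ν + 1) * exp (y / (2 * τ)) *
      (v ^ ν * exp (-(v / (2 * τ))) * besselClifford ν (-(y / (4 * τ ^ 2)) * v)) := by
  have : 0 < √(v * y) := sqrt_pos.2 (by positivity)
  have hprefactor := besq_prefactor_mul_rpow ν hτ hv hy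
  rw [besqQ, besselJ_eq_rpow_mul_besselClifford ν (by positivity), sq_sqrt_mul_div_div hv hy,
    show -(y / (4 * τ ^ 2)) * v = -(v * y / (4 * τ ^ 2)) by ring,
    show (y - v) / (2 * τ) = y / (2 * τ) + -(v / (2 * τ)) by ring, exp_add]
  linear_combination (exp (y / (2 * τ)) * exp (-(v / (2 * τ))) *
    besselClifford ν (-(v * y / (4 * τ ^ 2)))) * hprefactor

theorem measurable_besqDensity (hν : -1 < ν) (τ : ℝ) :
    Measurable fun z : ℝ × ℝ => besqDensity ν τ z.1 z.2 := by
  have := measurable_besselClifford hν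
  unfold besqDensity
  fun_prop

theorem besqDensity_nonneg (hν : -1 < ν) (hτ : 0 < τ) {x y : ℝ} (hx : 0 < x) (hy : 0 < y) :
    0 ≤ besqDensity ν τ x y := by
  have := besselClifford_nonneg hν (by positivity : 0 ≤ x * y / (4 * τ ^ 2))
  unfold besqDensity
  positivity

theorem integral_eval_mul_normalized_besselClifford (hν : -1 < ν) {s : ℝ} (hs : 0 < s) (α : ℝ)
    (p : ℝ[X]) :
    ∫ z in Set.Ioi (0 : ℝ), p.eval z * (s⁻¹ ^ (ν + 1) * exp (-(α * s)) *
        (z ^ ν * exp (-(z / s)) * besselClifford ν (α * z))) =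
      (besqFlow ν s p).eval (α * s ^ 2) := by
  simp only [mul_left_comm (eval _ p) (s⁻¹ ^ (ν + 1) * exp (-(α * s)))]
  rw [integral_const_mul, integral_eval_mul_besselClifford hν hs, inv_rpow hs.le, exp_neg]
  field_simp

theorem integral_eval_mul_besqDensity (hν : -1 < ν) (hτ : 0 < τ) (p : ℝ[X]) (y : ℝ) :
    ∫ z in Set.Ioi (0 : ℝ), p.eval z * besqDensity ν τ z y = (besqFlow ν (2 * τ) p).eval y := by
  have hmoment := integral_eval_mul_normalized_besselClifford hν (mul_pos two_pos hτ)
    (y / (4 * τ ^ 2)) p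
  rw [show y / (4 * τ ^ 2) * (2 * τ) ^ 2 = y by field_simp; norm_num] at hmoment
  rw [← hmoment]
  refine setIntegral_congr_fun measurableSet_Ioi fun z _ => ?_
  rw [besqDensity, show -((z + y) / (2 * τ)) = -(y / (4 * τ ^ 2) * (2 * τ)) + -(z / (2 * τ)) by
    field_simp; ring, exp_add, mul_comm z y, mul_div_right_comm y z]
  ring

theorem besqFlow_comp_C_mul_X (ν c r : ℝ) (p : ℝ[X]) :
    besqFlow ν c (p.comp (C r * X)) = (besqFlow ν (r * c) p).comp (C r * X) := by
  induction p using Polynomial.induction_on' with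
  | add p q hp hq => simp only [add_comp, map_add, hp, hq]
  | monomial n b =>
    rw [← C_mul_X_pow_eq_monomial, ← smul_eq_C_mul, smul_comp, map_smul, map_smul, smul_comp,
      X_pow_comp, mul_pow, ← C_pow, ← smul_eq_C_mul, map_smul]
    congr 1
    ext j
    rw [comp_C_mul_X_coeff, coeff_smul, coeff_besqFlow_X_pow, coeff_besqFlow_X_pow, smul_eq_mul]
    rcases le_or_gt j n with hj | hj
    · rw [← pow_sub_mul_pow r hj, mul_pow]
      ring
    · rw [Nat.choose_eq_zero_of_lt hj]
      simp

theorem integral_eval_neg_mul_besqQ (hν : -1 < ν) (hτ : 0 < τ) (p : ℝ[X]) {y : ℝ} (hy : 0 < y) :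
    ∫ v in Set.Ioi (0 : ℝ), p.eval (-v) * besqQ ν τ v y = (besqFlow ν (-(2 * τ)) p).eval y := by
  have hmoment := integral_eval_mul_normalized_besselClifford hν (mul_pos two_pos hτ)
    (-(y / (4 * τ ^ 2))) (p.comp (C (-1) * X))
  rw [besqFlow_comp_C_mul_X, eval_comp, eval_mul, eval_C, eval_X, neg_one_mul, neg_one_mul,
    show -(-(y / (4 * τ ^ 2)) * (2 * τ) ^ 2) = y by field_simp; norm_num] at hmoment
  rw [← hmoment]
  refine setIntegral_congr_fun measurableSet_Ioi fun v (hv : 0 < v) => ?_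
  rw [besqQ_eq_besselClifford ν hτ hv hy, eval_comp, eval_mul, eval_C, eval_X, neg_one_mul,
    show -(-(y / (4 * τ ^ 2)) * (2 * τ)) = y / (2 * τ) by field_simp; norm_num]

theorem integral_besqDensity_mul_besqDensity (hν : -1 < ν) {σ : ℝ} (hσ : 0 < σ) (hτ : 0 < τ)
    {x y : ℝ} (hx : 0 < x) (hy : 0 < y) :
    ∫ z in Set.Ioi (0 : ℝ), besqDensity ν σ x z * besqDensity ν τ z y =
      besqDensity ν (σ + τ) x y := by
  set s := 2 * σ * τ / (σ + τ) with hs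
  have hsplit (z : ℝ) : besqDensity ν σ x z * besqDensity ν τ z y =
      ((2 * σ)⁻¹ ^ (ν + 1) * (2 * τ)⁻¹ ^ (ν + 1) * x ^ ν * exp (-(x / (2 * σ) + y / (2 * τ)))) *
        (z ^ ν * exp (-(z / s)) * besselClifford ν (x / (4 * σ ^ 2) * z) *
          besselClifford ν (y / (4 * τ ^ 2) * z)) := by
    have hexp : exp (-((x + z) / (2 * σ))) * exp (-((z + y) / (2 * τ))) =
        exp (-(x / (2 * σ) + y / (2 * τ))) * exp (-(z / s)) := by
      rw [← exp_add, ← exp_add, hs]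
      congr 1
      field_simp
      ring
    rw [besqDensity, besqDensity, mul_comm z y, mul_div_right_comm y, mul_div_right_comm x]
    linear_combination ((2 * σ)⁻¹ ^ (ν + 1) * (2 * τ)⁻¹ ^ (ν + 1) * x ^ ν * z ^ ν *
      besselClifford ν (x / (4 * σ ^ 2) * z) * besselClifford ν (y / (4 * τ ^ 2) * z)) * hexp
  have hprefactor : (2 * σ)⁻¹ ^ (ν + 1) * (2 * τ)⁻¹ ^ (ν + 1) * s ^ (ν + 1) =
      (2 * (σ + τ))⁻¹ ^ (ν + 1) := by
    rw [← mul_rpow (by positivity) (by positivity), ← mul_rpow (by positivity) (by positivity), hs]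
    congr 1
    field_simp
  have hexp : exp (-(x / (2 * σ) + y / (2 * τ))) *
      exp ((x / (4 * σ ^ 2) + y / (4 * τ ^ 2)) * s) = exp (-((x + y) / (2 * (σ + τ)))) := by
    rw [← exp_add, hs]
    congr 1
    field_simp
    ring
  have harg : x / (4 * σ ^ 2) * (y / (4 * τ ^ 2)) * s ^ 2 = x * y / (4 * (σ + τ) ^ 2) := by
    rw [hs]
    field_simp
    norm_num
  simp only [hsplit]
  rw [integral_const_mul, integral_besselClifford_mul_besselClifford hν (by positivity)
    (by positivity) (by positivity), besqDensity, ← hprefactor, ← hexp, harg]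
  ring

theorem isBigO_pow_exp_mul (n : ℕ) {d : ℝ} (hd : 0 < d) :
    (fun y : ℝ => y ^ n) =O[𝓟 (Set.Ioi 0)] fun y => exp (d * y) := by
  refine isBigO_principal.2 ⟨n.factorial / d ^ n, fun y (hy : 0 < y) => ?_⟩
  rw [norm_of_nonneg (by positivity), norm_of_nonneg (by positivity)]
  calc y ^ n = n.factorial / d ^ n * ((d * y) ^ n / n.factorial) := by
        rw [mul_pow]
        field_simp
    _ ≤ n.factorial / d ^ n * exp (d * y) := by
        gcongr
        exact pow_div_factorial_le_exp (d * y) (by positivity) n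

theorem isBigO_eval_exp_mul (p : ℝ[X]) {d : ℝ} (hd : 0 < d) :
    (fun y : ℝ => p.eval y) =O[𝓟 (Set.Ioi 0)] fun y => exp (d * y) := by
  induction p using Polynomial.induction_on' with
  | add p q hp hq =>
    simp only [eval_add]
    exact hp.add hq
  | monomial n r =>
    simp only [eval_monomial]
    exact (isBigO_pow_exp_mul n hd).const_mul_left r

/-- The slack `w + τ < u` is what lets the Bessel–Clifford bound be split between the two
variables. -/
theorem isBigO_besqDensity (hν : -1 < ν) (hτ : 0 < τ) {u w : ℝ} (hw : 0 < w) (huw : w + τ < u) :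
    (fun z : ℝ × ℝ => besqDensity ν τ z.1 z.2) =O[𝓟 (Set.Ioi 0 ×ˢ Set.Ioi 0)]
      fun z => z.1 ^ ν * exp (-(z.1 / (2 * u))) * exp (z.2 / (2 * w)) := by
  have hu : 0 < u := by linarith
  set r := (u - τ) / u with hr
  have hr₀ : 0 < r := div_pos (by linarith) hu
  have hθ : 1 < r * ((w + τ) / w) := by
    rw [hr, div_mul_div_comm, one_lt_div (by positivity)]
    nlinarith
  obtain ⟨C, hC⟩ := exists_besselClifford_mul_le hν hθ
  refine isBigO_principal.2 ⟨(2 * τ)⁻¹ ^ (ν + 1) * C, fun z ⟨hx, hy⟩ => ?_⟩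
  obtain ⟨x, y⟩ := z
  change 0 < x at hx
  change 0 < y at hy
  have hbound := hC (r * x / (2 * τ)) (y / (2 * τ * r)) (by positivity) (by positivity)
  rw [show r * x / (2 * τ) * (y / (2 * τ * r)) = x * y / (4 * τ ^ 2) by
    field_simp; norm_num] at hbound
  have hexp : exp (-((x + y) / (2 * τ))) * (exp (r * x / (2 * τ)) *
      exp (r * ((w + τ) / w) * (y / (2 * τ * r)))) = exp (-(x / (2 * u))) * exp (y / (2 * w)) := by
    rw [← exp_add, ← exp_add, ← exp_add]
    congr 1
    rw [hr] at hr₀ ⊢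
    have : u - τ ≠ 0 := by linarith
    field_simp
    ring
  rw [norm_of_nonneg (besqDensity_nonneg hν hτ hx hy), norm_of_nonneg (by positivity)]
  calc besqDensity ν τ x y
      ≤ (2 * τ)⁻¹ ^ (ν + 1) * x ^ ν * exp (-((x + y) / (2 * τ))) * (C * (exp (r * x / (2 * τ)) *
          exp (r * ((w + τ) / w) * (y / (2 * τ * r))))) := by
        unfold besqDensity
        gcongr
    _ = (2 * τ)⁻¹ ^ (ν + 1) * C * (x ^ ν * (exp (-((x + y) / (2 * τ))) * (exp (r * x / (2 * τ)) *
          exp (r * ((w + τ) / w) * (y / (2 * τ * r)))))) := by ring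
    _ = (2 * τ)⁻¹ ^ (ν + 1) * C * (x ^ ν * exp (-(x / (2 * u))) * exp (y / (2 * w))) := by
        rw [hexp, ← mul_assoc (x ^ ν)]

end BesqDensity

section NoncollidingBesq

open Finset Polynomial Filter Asymptotics

variable {ν : ℝ} {M N : ℕ} {a : Fin N → ℝ} {t : Fin M → ℝ}

/-- The initial functions `p^{(ν)}(t_m, · | a_ℓ)` of the Eynard–Mehta system of the process started
at `a`. -/
noncomputable def besqInitial (ν : ℝ) (a : Fin N → ℝ) (t : Fin M → ℝ) (m : Fin M) (ℓ : Fin N)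
    (x : ℝ) : ℝ :=
  besqDensity ν (t m) x (a ℓ)

/-- The final functions of the same system: the Lagrange basis at the nodes `a`, evolved backwards
by the time `t_m`. -/
noncomputable def besqFinal (ν : ℝ) (a : Fin N → ℝ) (t : Fin M → ℝ) (m : Fin M) (ℓ : Fin N)
    (y : ℝ) : ℝ :=
  (besqFlow ν (-(2 * t m)) (Lagrange.basis univ a ℓ)).eval y

/-- The transition densities from time `t_n` to time `t_m`. -/
noncomputable def besqTransition (ν : ℝ) (t : Fin M → ℝ) (m n : Fin M) (x y : ℝ) : ℝ :=
  besqDensity ν (t m - t n) x y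

theorem integral_eval_besqFlow_mul_besqDensity (hν : -1 < ν) {τ : ℝ} (hτ : 0 < τ) (c : ℝ)
    (p : ℝ[X]) (y : ℝ) :
    ∫ z in Set.Ioi (0 : ℝ), (besqFlow ν c p).eval z * besqDensity ν τ z y =
      (besqFlow ν (2 * τ + c) p).eval y := by
  rw [integral_eval_mul_besqDensity hν hτ, besqFlow_besqFlow hν]

theorem integral_besqFinal_mul_besqInitial (hν : -1 < ν) (ha : Function.Injective a)
    {m : Fin M} (htm : 0 < t m) (i j : Fin N) :
    ∫ z in Set.Ioi (0 : ℝ), besqFinal ν a t m i z * besqInitial ν a t m j z =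
      (1 : Matrix (Fin N) (Fin N) ℝ) i j := by
  simp only [besqFinal, besqInitial]
  rw [integral_eval_besqFlow_mul_besqDensity hν htm, add_neg_cancel, besqFlow_zero hν,
    eval_lagrange_basis_eq_one_apply ha]

theorem integral_besqFinal_mul_besqTransition (hν : -1 < ν) (a : Fin N → ℝ) {m n : Fin M}
    (hnm : t n < t m) (i : Fin N) (y : ℝ) :
    ∫ z in Set.Ioi (0 : ℝ), besqFinal ν a t m i z * besqTransition ν t m n z y =
      besqFinal ν a t n i y := by
  simp only [besqFinal, besqTransition]
  rw [integral_eval_besqFlow_mul_besqDensity hν (sub_pos.2 hnm)]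
  congr 2
  ring_nf

theorem integrableOn_rpow_mul_exp_mul_exp (hν : -1 < ν) {u w : ℝ} (hu : 0 < u) (huw : u < w) :
    IntegrableOn (fun z : ℝ => z ^ ν * exp (-(z / (2 * u))) * exp (z / (2 * w))) (Set.Ioi 0) := by
  have hw : 0 < w := hu.trans huw
  have hs : 0 < 2 * u * w / (w - u) := div_pos (by positivity) (sub_pos.2 huw)
  refine (integrableOn_pow_mul_rpow_mul_exp hν hs 0).congr_fun (fun z _ => ?_) measurableSet_Ioi
  simp only
  rw [pow_zero, one_mul, mul_assoc (z ^ ν), ← exp_add]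
  congr 2
  have := sub_ne_zero.2 huw.ne'
  field_simp
  ring

theorem isBigO_besqInitial (hν : -1 < ν) (ha : ∀ ℓ, 0 < a ℓ) {m : Fin M} (htm : 0 < t m) {u : ℝ}
    (hu : t m < u) (ℓ : Fin N) :
    besqInitial ν a t m ℓ =O[𝓟 (Set.Ioi 0)] fun x => x ^ ν * exp (-(x / (2 * u))) := by
  have hprod := (isBigO_besqDensity hν htm (w := (u - t m) / 2) (u := u) (by linarith)
    (by linarith)).comp_tendsto (k := fun x => (x, a ℓ))
      (tendsto_principal_principal.2 fun x hx => ⟨hx, ha ℓ⟩)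
  refine hprod.trans ?_
  simp only [Function.comp_def, mul_comm _ (exp (a ℓ / _))]
  exact (isBigO_refl _ _).const_mul_left _

/-- The bounds decay at the rates `u_m = t_m + 2m + 1` on the left and grow at the rates
`w_m = t_m + 2m + 2` on the right: `u_m < w_m` makes their product integrable, and
`w_n + (t_m - t_n) < u_m` for `n < m` bounds the transition densities. -/
theorem isEynardMehtaSystem_besq (hν : -1 < ν) (ha : ∀ ℓ, 0 < a ℓ) (hinj : Function.Injective a)
    (ht : ∀ m, 0 < t m) (hmono : StrictMono t) :
    IsEynardMehtaSystem (besqInitial ν a t) (besqFinal ν a t) (besqTransition ν t)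
      (fun m x => x ^ ν * exp (-(x / (2 * (t m + 2 * (m : ℕ) + 1)))))
      (fun m y => exp (y / (2 * (t m + 2 * (m : ℕ) + 2)))) (Set.Ioi 0)
      (volume.restrict (Set.Ioi 0)) where
  ae_mem := ae_restrict_mem measurableSet_Ioi
  integrable_dom m := integrableOn_rpow_mul_exp_mul_exp hν
    (by have := ht m; positivity) (by linarith)
  measurable_left m ℓ := (measurable_besqDensity hν (t m)).comp measurable_prodMk_right
  measurable_right m ℓ := (Polynomial.continuous _).measurable
  measurable_transition m n _ := measurable_besqDensity hν (t m - t n)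
  isBigO_left m := isBigO_besqInitial hν ha (ht m)
    (by linarith [(m : ℕ).cast_nonneg (α := ℝ)])
  isBigO_right m ℓ := by
    have hw : 0 < (2 * (t m + 2 * (m : ℕ) + 2))⁻¹ := by
      have := ht m
      positivity
    simpa only [div_eq_inv_mul] using! isBigO_eval_exp_mul _ hw
  isBigO_transition m n hnm := isBigO_besqDensity hν (sub_pos.2 (hmono hnm))
    (by have := ht n; positivity) (by
      have : ((n : ℕ) : ℝ) + 1 ≤ (m : ℕ) := by exact_mod_cast hnm
      linarith)
  biorthonormal m := integral_besqFinal_mul_besqInitial hν hinj (ht m)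
  integral_transition_mul_left m n ℓ hnm x hx := by
    simp only [besqTransition, besqInitial]
    rw [integral_besqDensity_mul_besqDensity hν (sub_pos.2 (hmono hnm)) (ht n) hx (ha ℓ),
      sub_add_cancel]
  integral_right_mul_transition m n ℓ hnm y _ :=
    integral_besqFinal_mul_besqTransition hν a (hmono hnm) ℓ y
  integral_transition_mul_transition m r n hrm hnr x hx y hy := by
    simp only [besqTransition]
    rw [integral_besqDensity_mul_besqDensity hν (sub_pos.2 (hmono hrm)) (sub_pos.2 (hmono hnr)) hx
      hy, sub_add_sub_cancel]

theorem corrK_eq_extendedKernel (hν : -1 < ν) (ha : ∀ ℓ, 0 < a ℓ) (ht : ∀ m, 0 < t m)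
    (hmono : StrictMono t) (m n : Fin M) {x y : ℝ} (hx : 0 < x) (hy : 0 < y) :
    corrK ν a (t m) x (t n) y =
      extendedKernel (besqInitial ν a t) (besqFinal ν a t) (besqTransition ν t) m x n y := by
  simp only [corrK, extendedKernel, projectionKernel, transitionKernel, besqInitial, besqFinal,
    besqTransition, ← integral_eval_neg_mul_besqQ hν (ht n) _ hy, eval_lagrange_basis,
    sub_neg_eq_add, besqP_eq_besqDensity ν (ht m) hx (ha _), hmono.lt_iff_lt]
  congr 1
  split_ifs with hnm
  · exact besqP_eq_besqDensity ν (sub_pos.2 (hmono hnm)) hx hy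
  · rfl

theorem vdm_eq_det_vandermonde (x : Fin N → ℝ) : vdm x = (Matrix.vandermonde x).det :=
  (Matrix.det_vandermonde x).symm

theorem multitimeWeight_besq (hν : -1 < ν) (ha : ∀ ℓ, 0 < a ℓ) (hinj : Function.Injective a)
    {t : Fin (M + 1) → ℝ} (ht : 0 < t 0) (hmono : StrictMono t) {Y : Fin (M + 1) → Fin N → ℝ}
    (hY : ∀ m i, 0 < Y m i) :
    vdm (Y (Fin.last M)) *
        (∏ m : Fin M, (Matrix.of fun i j : Fin N =>
          besqP ν (t m.succ - t m.castSucc) (Y m.succ i) (Y m.castSucc j)).det) *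
        (Matrix.of fun i j : Fin N => besqP ν (t 0) (Y 0 i) (a j)).det / vdm a =
      multitimeWeight (besqInitial ν a t) (besqFinal ν a t) (besqTransition ν t) Y := by
  have hvdm : (Matrix.vandermonde a).det ≠ 0 := Matrix.det_vandermonde_ne_zero_iff.2 hinj
  have hτ (m : Fin M) : 0 < t m.succ - t m.castSucc := sub_pos.2 (hmono m.castSucc_lt_succ)
  simp only [multitimeWeight, besqInitial, besqFinal, besqTransition, vdm_eq_det_vandermonde,
    besqP_eq_besqDensity ν ht (hY 0 _) (ha _),
    besqP_eq_besqDensity ν (hτ _) (hY (Fin.succ _) _) (hY (Fin.castSucc _) _),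
    ← det_vandermonde_mul_det_eval_besqFlow_lagrange hν (-(2 * t (Fin.last M))) hinj
      (Y (Fin.last M))]
  field_simp

/-- The `N` points at each time `m`, split into the first `k m` of them and the others. -/
def sigmaFinSumSigmaFinSubEquiv {k : Fin M → ℕ} (hk : ∀ m, k m ≤ N) :
    ((m : Fin M) × Fin (k m)) ⊕ ((m : Fin M) × Fin (N - k m)) ≃ Fin M × Fin N :=
  (Equiv.sigmaSumDistrib _ _).symm.trans <| (Equiv.sigmaCongrRight fun m =>
    finSumFinEquiv.trans (finCongr (Nat.add_sub_of_le (hk m)))).trans (Equiv.sigmaEquivProd _ _)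

theorem sigmaFinSumSigmaFinSubEquiv_inl {k : Fin M → ℕ} (hk : ∀ m, k m ≤ N)
    (p : (m : Fin M) × Fin (k m)) :
    sigmaFinSumSigmaFinSubEquiv hk (.inl p) = (p.1, p.2.castLE (hk p.1)) :=
  rfl

theorem sigmaFinSumSigmaFinSubEquiv_inr {k : Fin M → ℕ} (hk : ∀ m, k m ≤ N)
    (p : (m : Fin M) × Fin (N - k m)) :
    sigmaFinSumSigmaFinSubEquiv hk (.inr p) =
      (p.1, (p.2.natAdd (k p.1)).cast (Nat.add_sub_of_le (hk p.1))) :=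
  rfl

theorem fullConfig_eq_sumElim {Nm : ℕ → ℕ} (hNm : ∀ m : Fin M, Nm m ≤ N) (x : ℕ → ℕ → ℝ)
    (z : ((m : Fin M) × Fin (N - Nm m)) → ℝ) (m : Fin M) (i : Fin N) :
    fullConfig N M Nm x z m i =
      Sum.elim (fun p : (m : Fin M) × Fin (Nm m) => x p.1 p.2) z
        ((sigmaFinSumSigmaFinSubEquiv hNm).symm (m, i)) := by
  obtain ⟨c, hc⟩ := (sigmaFinSumSigmaFinSubEquiv hNm).surjective (m, i)
  rw [← hc, Equiv.symm_apply_apply]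
  rcases c with p | p
  · rw [sigmaFinSumSigmaFinSubEquiv_inl] at hc
    cases hc
    simp [fullConfig]
  · rw [sigmaFinSumSigmaFinSubEquiv_inr] at hc
    cases hc
    simp [fullConfig]

theorem fullConfig_pos {Nm : ℕ → ℕ} {x : ℕ → ℕ → ℝ} (hx : ∀ m < M, ∀ i < Nm m, 0 < x m i)
    {z : ((m : Fin M) × Fin (N - Nm m)) → ℝ} (hz : ∀ b, 0 < z b) (m : Fin M) (i : Fin N) :
    0 < fullConfig N M Nm x z m i := by
  rw [fullConfig]
  split_ifs with h
  · exact hx m m.isLt i h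
  · exact hz _

theorem card_filter_sigma_fst_eq (k : Fin M → ℕ) (r : Fin M) :
    #{s : (m : Fin M) × Fin (k m) | s.1 = r} = k r := by
  have hfiber : ({s | s.1 = r} : Finset ((m : Fin M) × Fin (k m))) =
      univ.map (Function.Embedding.sigmaMk r) := by
    ext ⟨m, i⟩
    simp only [mem_filter_univ, Finset.mem_map, mem_univ, true_and,
      Function.Embedding.sigmaMk_apply]
    exact ⟨by rintro rfl; exact ⟨i, rfl⟩, fun ⟨_, h⟩ => (congrArg Sigma.fst h).symm⟩
  rw [hfiber, card_map, card_univ, Fintype.card_fin]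

theorem integral_multitimeWeight_fullConfig {φ ψ : Fin (M + 1) → Fin N → ℝ → ℝ}
    {P : Fin (M + 1) → Fin (M + 1) → ℝ → ℝ → ℝ} {f g : Fin (M + 1) → ℝ → ℝ} {S : Set ℝ}
    (h : IsEynardMehtaSystem φ ψ P f g S (volume.restrict S)) {Nm : ℕ → ℕ}
    (hNm : ∀ m : Fin (M + 1), Nm m ≤ N) {x : ℕ → ℕ → ℝ}
    (hx : ∀ p : (m : Fin (M + 1)) × Fin (Nm m), x p.1 p.2 ∈ S) :
    (∏ m ∈ range (M + 1), (1 / (N - Nm m).factorial : ℝ)) *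
        ∫ z in Set.univ.pi fun _ => S, multitimeWeight φ ψ P (fullConfig N (M + 1) Nm x z) =
      (kernelMatrix (extendedKernel φ ψ P) Sigma.fst
        fun p : (m : Fin (M + 1)) × Fin (Nm m) => x p.1 p.2).det := by
  have hcard (r : Fin (M + 1)) :
      #{b | (sigmaFinSumSigmaFinSubEquiv hNm (.inr b)).1 = r} = N - Nm r :=
    card_filter_sigma_fst_eq _ r
  have hcorr := integral_multitimeWeight h (sigmaFinSumSigmaFinSubEquiv hNm) hx
  simp only [← fullConfig_eq_sumElim, sigmaFinSumSigmaFinSubEquiv_inl, hcard] at hcorr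
  rw [volume_pi, Measure.restrict_pi_pi, prod_range, hcorr, ← mul_assoc, ← prod_mul_distrib,
    prod_eq_one fun m _ => one_div_mul_cancel (Nat.cast_ne_zero.2 (Nat.factorial_ne_zero _)),
    one_mul]

end NoncollidingBesq

/-- The noncolliding BESQ^{(ν)} process started at `0 < a₁ < ⋯ < a_N` is
determinantal: its `(N₁, …, N_M)`-multitime correlation function equals the
determinant of the kernel `K`. -/
theorem multitime_correlation_determinantal
    (ν : ℝ) (hν : -1 < ν) (N : ℕ) (hN : 1 ≤ N)
    (a : Fin N → ℝ) (hapos : ∀ ℓ, 0 < a ℓ) (hamono : StrictMono a)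
    (M : ℕ) (hM : 1 ≤ M) (t : ℕ → ℝ)
    (ht0 : 0 < t 0) (htmono : ∀ m, m + 1 < M → t m < t (m + 1))
    (Nm : ℕ → ℕ) (hNm : ∀ m < M, 1 ≤ Nm m ∧ Nm m ≤ N)
    (x : ℕ → ℕ → ℝ)
    (hxpos : ∀ m < M, ∀ i < Nm m, 0 < x m i)
    (hxdist : ∀ m < M, ∀ i < Nm m, ∀ j < Nm m, i ≠ j → x m i ≠ x m j) :
    (∏ m ∈ Finset.range M, (1 / (N - Nm m).factorial : ℝ)) *
        ∫ z in Set.univ.pi (fun _ : (m : Fin M) × Fin (N - Nm m) => Set.Ioi (0 : ℝ)),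
          (vdm (fullConfig N M Nm x z ⟨M - 1, by omega⟩) *
            (∏ m : Fin (M - 1),
              Matrix.det (Matrix.of fun i j : Fin N =>
                besqP ν (t ((m : ℕ) + 1) - t m)
                  (fullConfig N M Nm x z ⟨(m : ℕ) + 1, by have := m.isLt; omega⟩ i)
                  (fullConfig N M Nm x z ⟨(m : ℕ), by have := m.isLt; omega⟩ j))) *
            Matrix.det (Matrix.of fun i j : Fin N =>
              besqP ν (t 0) (fullConfig N M Nm x z ⟨0, by omega⟩ i) (a j)) /
            vdm a)
      = Matrix.det (Matrix.of
          fun p q : (m : Fin M) × Fin (Nm m) =>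
            corrK ν a (t p.1) (x p.1 p.2) (t q.1) (x q.1 q.2)) := by
  obtain ⟨M, rfl⟩ : ∃ M', M = M' + 1 := ⟨M - 1, by omega⟩
  have hmono : StrictMono fun m : Fin (M + 1) => t m :=
    Fin.strictMono_iff_lt_succ.2 fun m => htmono m (by omega)
  have ht (m : Fin (M + 1)) : 0 < t m := ht0.trans_le (hmono.monotone (Fin.zero_le m))
  have hNm' (m : Fin (M + 1)) : Nm m ≤ N := (hNm m m.isLt).2
  have hx (p : (m : Fin (M + 1)) × Fin (Nm m)) : 0 < x p.1 p.2 := hxpos p.1 p.1.isLt p.2 p.2.isLt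
  calc
    _ = _ := congrArg _ <| setIntegral_congr_fun (MeasurableSet.univ_pi fun _ => measurableSet_Ioi)
      fun z hz => multitimeWeight_besq (t := fun m : Fin (M + 1) => t m) hν hapos hamono.injective
        ht0 hmono (fullConfig_pos hxpos fun b => hz b (Set.mem_univ b))
    _ = _ := integral_multitimeWeight_fullConfig
      (isEynardMehtaSystem_besq hν hapos hamono.injective ht hmono) hNm' hx
    _ = _ := congrArg _ <| Matrix.ext fun p q =>
      (corrK_eq_extendedKernel hν hapos ht hmono p.1 q.1 (hx p) (hx q)).symm
end
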